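/- arXiv:1006.0590 — 2 statements merged into one kernel-verified Lean document; each statement's English description precedes it below -/
import Mathlib

section
/- For every ξ > 0 there exists an integer n₀ = n₀(ξ) such that every regular tournament G on n ≥ n₀ vertices contains a set of at most (1/2 + ξ)n Hamilton cycles which together cover all the edges of G. -/
/-- The outdegree of a vertex `x` in the digraph with adjacency relation `G`. -/
noncomputable def outDeg {V : Type*} (G : V → V → Prop) (x : V) : ℕ :=
  Nat.card {y : V // G x y}

/-- The indegree of a vertex `x` in the digraph with adjacency relation `G`. -/
noncomputable def inDeg {V : Type*} (G : V → V → Prop) (x : V) : ℕ :=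
  Nat.card {y : V // G y x}

/-- A tournament: loopless, and between any two distinct vertices exactly one directed edge. -/
def IsTournament {V : Type*} (G : V → V → Prop) : Prop :=
  (∀ x, ¬ G x x) ∧ ∀ x y : V, x ≠ y → (G x y ↔ ¬ G y x)

/-- `f` is a Hamilton cycle of the digraph `G`: a cyclic ordering of all vertices
with each consecutive pair joined by an edge. -/
def IsHamCycle {V : Type*} [Fintype V] (G : V → V → Prop)
    (f : ZMod (Fintype.card V) → V) : Prop :=
  Function.Bijective f ∧ ∀ i, G (f i) (f (i + 1))

section HamiltonCover

open scoped Classical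
open Finset

variable {V : Type*}

/-- The number of outneighbours of `v` in `S`. -/
noncomputable def outN (G : V → V → Prop) (v : V) (S : Finset V) : ℕ := #{y ∈ S | G v y}

/-- The number of inneighbours of `v` in `S`. -/
noncomputable def inN (G : V → V → Prop) (v : V) (S : Finset V) : ℕ := #{y ∈ S | G y v}

/-- Every vertex has almost half of `S` as outneighbours, and as inneighbours. -/
def HalfBalanced (G : V → V → Prop) (S : Finset V) : Prop :=
  ∀ v, 19 * #S ≤ 40 * outN G v S ∧ 19 * #S ≤ 40 * inN G v S

lemma IsTournament.asymm {G : V → V → Prop} (hG : IsTournament G) {x y : V} (h : G x y) :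
    ¬ G y x := by
  rcases eq_or_ne x y with rfl | hne
  · exact hG.1 x
  · exact (hG.2 x y hne).1 h

lemma IsTournament.ne {G : V → V → Prop} (hG : IsTournament G) {x y : V} (h : G x y) :
    x ≠ y := by
  rintro rfl
  exact hG.1 x h

lemma IsTournament.total {G : V → V → Prop} (hG : IsTournament G) {x y : V} (h : x ≠ y) :
    G x y ∨ G y x := by
  by_cases hyx : G y x
  · exact Or.inr hyx
  · exact Or.inl ((hG.2 x y h).2 hyx)

lemma outN_add_inN {G : V → V → Prop} (hG : IsTournament G) (S : Finset V) (v : V) :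
    outN G v S + inN G v S = #(S.erase v) := by
  unfold outN inN
  rw [← card_union_of_disjoint]
  · congr 1
    ext y
    simp only [mem_union, mem_filter, mem_erase]
    constructor
    · rintro (⟨h, h'⟩ | ⟨h, h'⟩)
      · exact ⟨(hG.ne h').symm, h⟩
      · exact ⟨hG.ne h', h⟩
    · rintro ⟨h, h'⟩
      rcases hG.total h with h2 | h2
      · exact Or.inr ⟨h', h2⟩
      · exact Or.inl ⟨h', h2⟩
  · rw [disjoint_left]
    intro y h1 h2
    exact hG.asymm (mem_filter.1 h1).2 (mem_filter.1 h2).2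

lemma exists_small_outN {G : V → V → Prop} (hG : IsTournament G) {S : Finset V}
    (hS : S.Nonempty) : ∃ a ∈ S, 2 * outN G a S + 1 ≤ #S := by
  apply exists_le_of_sum_le hS
  have h1 : ∑ a ∈ S, outN G a S = ∑ a ∈ S, inN G a S :=
    sum_card_bipartiteAbove_eq_sum_card_bipartiteBelow (fun a b => G a b)
  have h2 : ∀ a ∈ S, outN G a S + inN G a S + 1 = #S := by
    intro a ha
    rw [outN_add_inN hG, card_erase_add_one ha]
  rw [← sum_congr rfl h2]
  simp only [sum_add_distrib, ← mul_sum, ← h1]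
  apply le_of_eq
  ring

lemma exists_edge_between {G : V → V → Prop} (hG : IsTournament G) {Y U A B : Finset V}
    (hY : HalfBalanced G Y) (hcard : 20 ≤ #Y) (hU : 40 * #(U ∩ Y) ≤ #Y) (hA : A ⊆ Y) (hB : B ⊆ Y)
    (hA' : 19 * #Y ≤ 40 * #A) (hB' : 19 * #Y ≤ 40 * #B) :
    ∃ a ∈ A, ∃ b ∈ B, a ∉ U ∧ b ∉ U ∧ G a b := by
  by_contra! hno
  set A1 := A \ U with hA1
  set B1 := B \ U with hB1
  have hsd : ∀ T ⊆ Y, #T ≤ #(T \ U) + #(U ∩ Y) := by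
    intro T hT
    rw [← card_sdiff_add_card_inter T U]
    have : #(T ∩ U) ≤ #(U ∩ Y) := by
      apply card_le_card
      intro x hx
      rw [mem_inter] at hx ⊢
      exact ⟨hx.2, hT hx.1⟩
    omega
  have hA1c : #A ≤ #A1 + #(U ∩ Y) := hsd A hA
  have hB1c : #B ≤ #B1 + #(U ∩ Y) := hsd B hB
  have hAB1 : #(A1 ∩ B1) ≤ 1 := by
    rw [card_le_one]
    intro x hx y hy
    by_contra hne
    simp only [hA1, hB1, mem_inter, mem_sdiff] at hx hy
    rcases hG.total hne with h | h
    · exact hno x hx.1.1 y hy.2.1 hx.1.2 hy.1.2 h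
    · exact hno y hy.1.1 x hx.2.1 hy.1.2 hx.1.2 h
  have hA1Y : A1 ⊆ Y := sdiff_subset.trans hA
  have hB1Y : B1 ⊆ Y := sdiff_subset.trans hB
  have hun := card_union_add_card_inter A1 B1
  have hunY : #(A1 ∪ B1) ≤ #Y := card_le_card (union_subset hA1Y hB1Y)
  have hne : A1.Nonempty := by
    rw [← card_pos]
    omega
  obtain ⟨a, ha, hao⟩ := exists_small_outN hG hne
  have h3 : outN G a Y ≤ outN G a A1 + #(Y \ (A1 ∪ B1)) := by
    unfold outN
    rw [← card_union_add_card_inter]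
    refine le_trans (card_le_card ?_) (Nat.le_add_right _ _)
    intro y hy
    simp only [mem_union, mem_filter, mem_sdiff] at hy ⊢
    by_cases h1 : y ∈ A1
    · exact Or.inl ⟨h1, hy.2⟩
    · refine Or.inr ⟨hy.1, ?_⟩
      rintro (h | h)
      · exact h1 h
      · rw [hB1, mem_sdiff] at h
        rw [hA1, mem_sdiff] at ha
        exact hno a ha.1 y h.1 ha.2 h.2 hy.2
  rw [card_sdiff_of_subset (union_subset hA1Y hB1Y)] at h3
  have h4 := (hY a).1
  omega

lemma exists_link {G : V → V → Prop} (hG : IsTournament G) {Y U : Finset V}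
    (hY : HalfBalanced G Y) (hcard : 20 ≤ #Y) (hU : 40 * #(U ∩ Y) ≤ #Y) (u v : V) :
    ∃ a ∈ Y, ∃ b ∈ Y, a ∉ U ∧ b ∉ U ∧ G u a ∧ G a b ∧ G b v := by
  obtain ⟨a, ha, b, hb, h1, h2, h3⟩ := exists_edge_between hG hY hcard hU
    (filter_subset (fun y => G u y) Y) (filter_subset (fun y => G y v) Y) (hY u).1 (hY v).2
  rw [mem_filter] at ha hb
  exact ⟨a, ha.1, b, hb.1, h1, h2, ha.2, h3, hb.2⟩

lemma exists_gadget {G : V → V → Prop} (hG : IsTournament G) {Y U : Finset V}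
    (hY : HalfBalanced G Y) (hcard : 20 ≤ #Y) (hU : 40 * #(U ∩ Y) ≤ #Y) (z : V) :
    ∃ a ∈ Y, ∃ b ∈ Y, a ∉ U ∧ b ∉ U ∧ G a z ∧ G a b ∧ G z b := by
  obtain ⟨a, ha, b, hb, h1, h2, h3⟩ := exists_edge_between hG hY hcard hU
    (filter_subset (fun y => G y z) Y) (filter_subset (fun y => G z y) Y) (hY z).2 (hY z).1
  rw [mem_filter] at ha hb
  exact ⟨a, ha.1, b, hb.1, h1, h2, ha.2, h3, hb.2⟩

lemma exists_isChain_insert {G : V → V → Prop} (hG : IsTournament G) (v : V) (l : List V)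
    (hl : l.IsChain G) (hv : v ∉ l) :
    ∃ l' : List V, l'.Perm (v :: l) ∧ l'.IsChain G ∧ ∀ u ∈ l'.head?, u = v ∨ u ∈ l.head? := by
  induction l with
  | nil => exact ⟨[v], List.Perm.refl _, List.isChain_singleton _, by simp⟩
  | cons x t ih =>
    simp only [List.mem_cons, not_or] at hv
    rcases hG.total hv.1 with h | h
    · refine ⟨v :: x :: t, List.Perm.refl _, ?_, by simp⟩
      rw [List.isChain_cons]
      exact ⟨by simpa using h, hl⟩
    · rw [List.isChain_cons] at hl
      obtain ⟨l', hp, hc, hh⟩ := ih hl.2 hv.2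
      refine ⟨x :: l', ?_, ?_, by simp⟩
      · exact (hp.cons x).trans (List.Perm.swap _ _ _)
      · rw [List.isChain_cons]
        refine ⟨fun y hy => ?_, hc⟩
        rcases hh y hy with rfl | h2
        · exact h
        · exact hl.1 y h2

/-- Rédei's theorem: every finite set of vertices of a tournament spans a path. -/
lemma exists_hamilton_path {G : V → V → Prop} (hG : IsTournament G) (S : Finset V) :
    ∃ l : List V, l.Nodup ∧ l.toFinset = S ∧ l.IsChain G := by
  induction S using Finset.induction_on with
  | empty => exact ⟨[], by simp⟩
  | insert v S hv ih =>
    obtain ⟨l, h1, h2, h3⟩ := ih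
    have hvl : v ∉ l := by rwa [← h2, List.mem_toFinset] at hv
    obtain ⟨l', hp, hc, -⟩ := exists_isChain_insert hG v l h3 hvl
    refine ⟨l', hp.nodup_iff.2 (List.nodup_cons.2 ⟨hvl, h1⟩), ?_, hc⟩
    rw [List.toFinset_eq_of_perm _ _ hp, List.toFinset_cons, h2]

/-- A path which starts and ends outside `Z` and which remains a path whenever some vertices of
`Z` are deleted from it. -/
structure FlexPath (G : V → V → Prop) (Z : Finset V) (P : List V) : Prop where
  chain : ∀ U ⊆ Z, (P.filter (· ∉ U)).IsChain G
  head : ∃ h ∉ Z, P.head? = some h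
  last : ∃ h ∉ Z, P.getLast? = some h

lemma head?_filter_notMem {P : List V} {h : V} {U : Finset V} (hP : P.head? = some h)
    (hU : h ∉ U) : (P.filter (· ∉ U)).head? = some h := by
  cases P with
  | nil => simp at hP
  | cons a t =>
    obtain rfl : a = h := by simpa using hP
    simp [hU]

lemma getLast?_filter_notMem {P : List V} {h : V} {U : Finset V} (hP : P.getLast? = some h)
    (hU : h ∉ U) : (P.filter (· ∉ U)).getLast? = some h := by
  obtain ⟨l, rfl⟩ := List.getLast?_eq_some_iff.1 hP
  simp [hU]

lemma FlexPath.append {G : V → V → Prop} {Z : Finset V} {P Q : List V} (hP : FlexPath G Z P)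
    (hQ : FlexPath G Z Q) (h : ∀ x ∈ P.getLast?, ∀ y ∈ Q.head?, G x y) :
    FlexPath G Z (P ++ Q) := by
  obtain ⟨a, ha, ha'⟩ := hP.head
  obtain ⟨b, hb, hb'⟩ := hQ.last
  obtain ⟨a2, ha2, ha2'⟩ := hP.last
  obtain ⟨b2, hb2, hb2'⟩ := hQ.head
  refine ⟨fun U hU => ?_, ⟨a, ha, ?_⟩, ⟨b, hb, ?_⟩⟩
  · rw [List.filter_append, List.isChain_append]
    refine ⟨hP.chain U hU, hQ.chain U hU, ?_⟩
    rw [getLast?_filter_notMem ha2' (fun h => ha2 (hU h)),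
      head?_filter_notMem hb2' (fun h => hb2 (hU h)), ← ha2', ← hb2']
    exact h
  · rw [List.head?_append, ha']
    rfl
  · rw [List.getLast?_append, hb']
    rfl

lemma FlexPath.of_isChain {G : V → V → Prop} {Z : Finset V} {P : List V} (hP : P.IsChain G)
    (hne : P ≠ []) (hZ : ∀ x ∈ P, x ∉ Z) : FlexPath G Z P := by
  refine ⟨fun U hU => ?_, ⟨P.head hne, hZ _ (List.head_mem hne), List.head?_eq_some_head hne⟩,
    ⟨P.getLast hne, hZ _ (List.getLast_mem hne), List.getLast?_eq_some_getLast hne⟩⟩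
  rwa [List.filter_eq_self.2]
  intro a ha
  simpa using fun h => hZ a ha (hU h)

lemma FlexPath.gadget {G : V → V → Prop} {Z : Finset V} {a z b : V} (ha : a ∉ Z) (hb : b ∉ Z)
    (h1 : G a z) (h2 : G a b) (h3 : G z b) : FlexPath G Z [a, z, b] := by
  refine ⟨fun U hU => ?_, ⟨a, ha, rfl⟩, ⟨b, hb, rfl⟩⟩
  have ha' : a ∉ U := fun h => ha (hU h)
  have hb' : b ∉ U := fun h => hb (hU h)
  by_cases hz : z ∈ U <;> simp [ha', hb', hz, h1, h2, h3]

lemma exists_gadgets {G : V → V → Prop} (hG : IsTournament G) {Y Z : Finset V}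
    (hY : HalfBalanced G Y) (hcard : 20 ≤ #Y) (hYZ : Disjoint Y Z) (Z' : Finset V) (hZ' : Z' ⊆ Z)
    (hb : 80 * #Z' ≤ #Y) :
    ∃ L : List (List V), L.length = #Z' ∧ (∀ p ∈ L, FlexPath G Z p) ∧ L.flatten.Nodup ∧
      L.flatten.toFinset ⊆ Z' ∪ Y ∧ Z' ⊆ L.flatten.toFinset ∧
      #(L.flatten.toFinset ∩ Y) ≤ 2 * #Z' := by
  induction Z' using Finset.induction_on with
  | empty => exact ⟨[], by simp⟩
  | insert z S hz ih =>
    rw [card_insert_of_notMem hz] at hb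
    obtain ⟨L, h1, h2, h3, h4, h5, h6⟩ := ih ((subset_insert _ _).trans hZ') (by omega)
    obtain ⟨a, ha, b, hb, hau, hbu, g1, g2, g3⟩ :=
      exists_gadget hG hY hcard (U := L.flatten.toFinset) (by omega) z
    have hzZ : z ∈ Z := hZ' (mem_insert_self _ _)
    have hzY : z ∉ Y := fun h => disjoint_left.1 hYZ h hzZ
    have hzL : z ∉ L.flatten.toFinset := by
      intro h
      rcases mem_union.1 (h4 h) with h | h
      · exact hz h
      · exact hzY h
    have hset : ([a, z, b] :: L).flatten.toFinset = {a, z, b} ∪ L.flatten.toFinset := by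
      ext x
      simp
    refine ⟨[a, z, b] :: L, ?_, ?_, ?_, ?_, ?_, ?_⟩
    · rw [card_insert_of_notMem hz, List.length_cons, h1]
    · intro p hp
      rcases List.mem_cons.1 hp with rfl | hp
      · exact FlexPath.gadget (disjoint_left.1 hYZ ha) (disjoint_left.1 hYZ hb) g1 g2 g3
      · exact h2 p hp
    · rw [List.flatten_cons, List.nodup_append']
      refine ⟨?_, h3, ?_⟩
      · simp [hG.ne g1, hG.ne g2, hG.ne g3]
      · intro x hx hx'
        rw [← List.mem_toFinset] at hx'
        simp only [List.mem_cons, List.not_mem_nil, or_false] at hx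
        rcases hx with rfl | rfl | rfl <;> contradiction
    · rw [hset]
      intro x hx
      simp only [mem_union, mem_insert, mem_singleton] at hx ⊢
      rcases hx with (rfl | rfl | rfl) | hx
      · exact Or.inr ha
      · exact Or.inl (Or.inl rfl)
      · exact Or.inr hb
      · rcases mem_union.1 (h4 hx) with h | h
        · exact Or.inl (Or.inr h)
        · exact Or.inr h
    · rw [hset]
      intro x hx
      rcases mem_insert.1 hx with rfl | hx
      · simp
      · exact mem_union_right _ (h5 hx)
    · rw [hset, card_insert_of_notMem hz]
      have : ({a, z, b} ∪ L.flatten.toFinset) ∩ Y ⊆ {a, b} ∪ (L.flatten.toFinset ∩ Y) := by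
        intro x hx
        simp only [mem_union, mem_insert, mem_singleton, mem_inter] at hx ⊢
        rcases hx with ⟨(rfl | rfl | rfl) | hx, hx'⟩
        · simp
        · exact absurd hx' hzY
        · simp
        · exact Or.inr ⟨hx, hx'⟩
      have h7 := (card_le_card this).trans (card_union_le _ _)
      have h8 : #({a, b} : Finset V) ≤ 2 := card_le_two
      omega

lemma FlexPath.exists_join {G : V → V → Prop} (hG : IsTournament G) {Y Z : Finset V}
    (hY : HalfBalanced G Y) (hcard : 20 ≤ #Y) (hYZ : Disjoint Y Z) (L : List (List V)) (P : List V)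
    (hP : FlexPath G Z P) (hL : ∀ p ∈ L, FlexPath G Z p) (hnd : (P ++ L.flatten).Nodup)
    (hb : 40 * (#((P ++ L.flatten).toFinset ∩ Y) + 2 * L.length) ≤ #Y) :
    ∃ Q : List V, FlexPath G Z Q ∧ Q.Nodup ∧ P <:+: Q ∧ (∀ p ∈ L, p <:+: Q) ∧
      #(Q.toFinset ∩ Y) ≤ #((P ++ L.flatten).toFinset ∩ Y) + 2 * L.length := by
  induction L generalizing P with
  | nil => exact ⟨P, hP, by simpa using hnd, List.infix_rfl, by simp, by simp⟩
  | cons p L ih =>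
    obtain ⟨u, -, hu⟩ := hP.last
    have hp := hL p (by simp)
    obtain ⟨v, -, hv⟩ := hp.head
    obtain ⟨a, ha, b, hb', hau, hbu, g1, g2, g3⟩ := exists_link hG hY hcard
      (U := (P ++ (p :: L).flatten).toFinset) (by omega) u v
    have hlink : FlexPath G Z [a, b] := by
      refine FlexPath.of_isChain (by simpa using g2) (by simp) ?_
      intro x hx
      simp only [List.mem_cons, List.not_mem_nil, or_false] at hx
      rcases hx with rfl | rfl
      · exact disjoint_left.1 hYZ ha
      · exact disjoint_left.1 hYZ hb'
    have hP1 : FlexPath G Z (P ++ ([a, b] ++ p)) := by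
      refine hP.append (hlink.append hp ?_) ?_
      · rw [hv]
        simpa using g3
      · rw [hu]
        simpa using g1
    have hperm : (P ++ ([a, b] ++ p) ++ L.flatten).Perm ([a, b] ++ (P ++ (p :: L).flatten)) := by
      have := (List.perm_append_comm (l₁ := P) (l₂ := [a, b])).append_right (p ++ L.flatten)
      simpa only [List.flatten_cons, List.append_assoc] using this
    have hset : (P ++ ([a, b] ++ p) ++ L.flatten).toFinset =
        {a, b} ∪ (P ++ (p :: L).flatten).toFinset := by
      rw [List.toFinset_eq_of_perm _ _ hperm]
      ext x
      simp
    have hcount : #((P ++ ([a, b] ++ p) ++ L.flatten).toFinset ∩ Y) ≤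
        #((P ++ (p :: L).flatten).toFinset ∩ Y) + 2 := by
      rw [hset, union_inter_distrib_right, add_comm]
      refine (card_union_le _ _).trans (Nat.add_le_add_right ?_ _)
      exact (card_le_card inter_subset_left).trans card_le_two
    rw [List.length_cons] at hb ⊢
    obtain ⟨Q, q1, q2, q3, q4, q5⟩ := ih (P ++ ([a, b] ++ p)) hP1
      (fun q hq => hL q (List.mem_cons_of_mem _ hq)) (by
        rw [hperm.nodup_iff, List.nodup_append']
        refine ⟨by simp [hG.ne g2], hnd, ?_⟩
        intro x hx hx'
        rw [← List.mem_toFinset] at hx'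
        simp only [List.mem_cons, List.not_mem_nil, or_false] at hx
        rcases hx with rfl | rfl <;> contradiction) (by omega)
    refine ⟨Q, q1, q2, (List.infix_append' [] P _).trans q3, ?_, by omega⟩
    intro q hq
    rcases List.mem_cons.1 hq with rfl | hq
    · refine (List.IsSuffix.isInfix ?_).trans q3
      rw [← List.append_assoc]
      exact List.suffix_append _ _
    · exact q4 q hq

lemma exists_isHamCycle_of_list [Fintype V] {G : V → V → Prop} {C : List V} (hnd : C.Nodup)
    (hmem : ∀ v, v ∈ C) (hchain : C.IsChain G) (hne : C ≠ [])
    (hclose : G (C.getLast hne) (C.head hne)) :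
    ∃ f : ZMod (Fintype.card V) → V, IsHamCycle G f ∧
      ∀ x y, [x, y] <:+: C → ∃ i, f i = x ∧ f (i + 1) = y := by
  have hlen : C.length = Fintype.card V := by
    rw [← List.toFinset_card_of_nodup hnd, ← card_univ]
    congr 1
    ext v
    simp [hmem]
  have hpos : 0 < C.length := List.length_pos_iff.2 hne
  have : NeZero (Fintype.card V) := ⟨by omega⟩
  have hlt : ∀ i : ZMod (Fintype.card V), i.val < C.length := by
    intro i
    rw [hlen]
    exact ZMod.val_lt i
  have hval : ∀ i : ZMod (Fintype.card V), (i + 1).val = (i.val + 1) % C.length := by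
    intro i
    rw [ZMod.val_add, ZMod.val_one_eq_one_mod, Nat.add_mod_mod, hlen]
  refine ⟨fun i => C[i.val]'(hlt i), ⟨?_, ?_⟩, ?_⟩
  · rw [Fintype.bijective_iff_injective_and_card, ZMod.card]
    refine ⟨fun i j hij => ?_, rfl⟩
    exact ZMod.val_injective _ ((hnd.getElem_inj_iff).1 hij)
  · intro i
    simp only [hval]
    by_cases h : i.val + 1 < C.length
    · simp only [Nat.mod_eq_of_lt h]
      exact List.isChain_iff_getElem.1 hchain _ h
    · have h1 : i.val + 1 = C.length := by
        have := hlt i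
        omega
      have h2 : i.val = C.length - 1 := by omega
      have h3 : (C.length - 1 + 1) % C.length = 0 := by rw [← h2, h1, Nat.mod_self]
      simp only [h2, h3]
      rwa [List.getLast_eq_getElem, List.head_eq_getElem] at hclose
  · rintro x y ⟨s, t, hst⟩
    have hs : s.length + 1 < C.length := by
      rw [← hst]
      simp
    refine ⟨(s.length : ℕ), ?_, ?_⟩
    · have : ((s.length : ℕ) : ZMod (Fintype.card V)).val = s.length := by
        rw [ZMod.val_natCast, Nat.mod_eq_of_lt (by omega)]
      simp only [this]
      simp [← hst]
    · have : (((s.length : ℕ) : ZMod (Fintype.card V)) + 1).val = s.length + 1 := by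
        rw [← Nat.cast_succ, ZMod.val_natCast, Nat.mod_eq_of_lt (by omega)]
      simp only [this]
      simp [← hst]

/-- A system of few disjoint paths in a tournament is contained in a Hamilton cycle, provided that
the remaining vertices contain two balanced sets of suitable sizes. -/
lemma exists_isHamCycle_of_paths [Fintype V] {G : V → V → Prop} (hG : IsTournament G)
    {Y Z : Finset V} (hY : HalfBalanced G Y) (hZ : HalfBalanced G Z) (hYZ : Disjoint Y Z)
    (hZcard : 80 ≤ #Z) (L : List (List V)) (hL : ∀ p ∈ L, p.IsChain G ∧ p ≠ [])
    (hnd : L.flatten.Nodup) (hLY : ∀ x ∈ L.flatten, x ∉ Y) (hLZ : ∀ x ∈ L.flatten, x ∉ Z)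
    (hcard : 160 * #Z + 80 * L.length < #Y) :
    ∃ f : ZMod (Fintype.card V) → V, IsHamCycle G f ∧
      ∀ p ∈ L, ∀ x y, [x, y] <:+: p → ∃ i, f i = x ∧ f (i + 1) = y := by
  obtain ⟨L₀, a1, a2, a3, a4, a5, a6⟩ := exists_gadgets hG hY (by omega) hYZ Z subset_rfl
    (by omega)
  obtain ⟨P, L₁, hPL⟩ : ∃ P L₁, L₀ = P :: L₁ := by
    cases L₀ with
    | nil => simp at a1; omega
    | cons P L₁ => exact ⟨P, L₁, rfl⟩
  have hflat : P ++ (L₁ ++ L).flatten = L₀.flatten ++ L.flatten := by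
    rw [hPL]
    simp
  have hall : ∀ p ∈ L₀ ++ L, FlexPath G Z p := by
    intro p hp
    rcases List.mem_append.1 hp with h | h
    · exact a2 p h
    · exact FlexPath.of_isChain (hL p h).1 (hL p h).2
        (fun x hx => hLZ x (List.mem_flatten_of_mem h hx))
  have hcnt : #((P ++ (L₁ ++ L).flatten).toFinset ∩ Y) ≤ 2 * #Z := by
    refine (card_le_card ?_).trans a6
    intro x hx
    rw [hflat, List.toFinset_append, mem_inter, mem_union] at hx
    rcases hx with ⟨h | h, h'⟩
    · exact mem_inter.2 ⟨h, h'⟩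
    · exact absurd h' (hLY x (List.mem_toFinset.1 h))
  have hlen : (L₁ ++ L).length + 1 = #Z + L.length := by
    rw [← a1, hPL]
    simp
    ring
  obtain ⟨Q, q1, q2, q3, q4, q5⟩ := FlexPath.exists_join hG hY (by omega) hYZ (L₁ ++ L) P
    (hall P (by rw [hPL]; simp))
    (fun p hp => hall p (by rw [hPL]; exact List.mem_cons_of_mem _ hp)) (by
      rw [hflat, List.nodup_append']
      refine ⟨a3, hnd, fun x hx hx' => ?_⟩
      rcases mem_union.1 (a4 (List.mem_toFinset.2 hx)) with h | h
      · exact hLZ x hx' h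
      · exact hLY x hx' h) (by omega)
  have hinf : ∀ p ∈ L₀ ++ L, p <:+: Q := by
    intro p hp
    rw [hPL] at hp
    rcases List.mem_cons.1 hp with rfl | h
    · exact q3
    · exact q4 p h
  have hZQ : ∀ z ∈ Z, z ∈ Q := by
    intro z hz
    obtain ⟨p, hp, hzp⟩ := List.mem_flatten.1 (List.mem_toFinset.1 (a5 hz))
    exact (hinf p (List.mem_append_left _ hp)).subset hzp
  obtain ⟨H, h1, h2, h3⟩ := exists_hamilton_path hG (univ \ Q.toFinset)
  have hHQ : ∀ x, x ∈ H ↔ x ∉ Q := by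
    intro x
    rw [← List.mem_toFinset, h2]
    simp
  have hHne : H ≠ [] := by
    rintro rfl
    have : Q.toFinset ∩ Y = Y := by
      rw [inter_eq_right]
      intro x _
      rw [List.mem_toFinset]
      by_contra hx
      simpa using (hHQ x).2 hx
    rw [this] at q5
    omega
  obtain ⟨s, hsZ, hs⟩ := q1.head
  obtain ⟨e, heZ, he⟩ := q1.last
  obtain ⟨z₁, m1, z₂, m2, -, -, g1, g2, g3⟩ := exists_link hG hZ (U := ∅) (by omega) (by simp)
    e (H.head hHne)
  obtain ⟨z₃, m3, z₄, m4, d3, d4, g4, g5, g6⟩ := exists_link hG hZ (U := {z₁, z₂}) (by omega)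
    (by
      have := (card_le_card (inter_subset_left (s₁ := ({z₁, z₂} : Finset V)) (s₂ := Z))).trans
        card_le_two
      omega) (H.getLast hHne) s
  set U : Finset V := {z₁, z₂, z₃, z₄} with hU
  have hUZ : U ⊆ Z := by
    intro x hx
    simp only [hU, mem_insert, mem_singleton] at hx
    rcases hx with rfl | rfl | rfl | rfl <;> assumption
  have hUQ : ∀ x ∈ U, x ∈ Q := fun x hx => hZQ x (hUZ hx)
  have hs' := head?_filter_notMem hs (fun h => hsZ (hUZ h))
  have he' := getLast?_filter_notMem he (fun h => heZ (hUZ h))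
  have hc := q1.chain U hUZ
  have hQnd := q2.filter (fun x => decide (x ∉ U))
  have hQm : ∀ x, x ∈ Q.filter (· ∉ U) ↔ x ∈ Q ∧ x ∉ U := by simp
  have hinf' : ∀ p ∈ L, p <:+: Q.filter (· ∉ U) := by
    intro p hp
    have := (hinf p (List.mem_append_right _ hp)).filter (fun x => decide (x ∉ U))
    rwa [List.filter_eq_self.2] at this
    intro x hx
    simpa using fun h => hLZ x (List.mem_flatten_of_mem hp hx) (hUZ h)
  generalize Q.filter (· ∉ U) = Q' at *
  have hQne : Q' ≠ [] := by
    rintro rfl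
    simp at hs'
  have hC : Q' ++ ([z₁, z₂] ++ (H ++ [z₃, z₄])) ≠ [] := by simp
  obtain ⟨f, hf, hf'⟩ := exists_isHamCycle_of_list (G := G)
    (C := Q' ++ ([z₁, z₂] ++ (H ++ [z₃, z₄]))) (by
      simp only [mem_insert, mem_singleton, not_or] at d3 d4
      have := hG.ne g2
      have := hG.ne g5
      have e1 := hUQ z₁ (by simp [hU])
      have e2 := hUQ z₂ (by simp [hU])
      have e3 := hUQ z₃ (by simp [hU])
      have e4 := hUQ z₄ (by simp [hU])
      rw [List.nodup_append', List.nodup_append', List.nodup_append']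
      refine ⟨hQnd, ⟨by simpa, ⟨h1, by simpa, ?_⟩, ?_⟩, ?_⟩
      · intro x hx hx'
        rw [hHQ] at hx
        simp only [List.mem_cons, List.not_mem_nil, or_false] at hx'
        rcases hx' with rfl | rfl <;> contradiction
      · intro x hx hx'
        simp only [List.mem_cons, List.not_mem_nil, or_false, List.mem_append, hHQ] at hx hx'
        grind
      · intro x hx hx'
        rw [hQm] at hx
        simp only [List.mem_cons, List.not_mem_nil, or_false, List.mem_append, hHQ] at hx'
        simp only [hU, mem_insert, mem_singleton] at hx
        grind) (by
      intro v
      have := hHQ v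
      have := hQm v
      simp only [hU, mem_insert, mem_singleton] at this
      simp only [List.mem_cons, List.not_mem_nil, or_false, List.mem_append]
      grind) (by
      rw [List.isChain_append, List.isChain_append, List.isChain_append, he']
      refine ⟨hc, ⟨by simpa, ⟨h3, by simpa, ?_⟩, ?_⟩, ?_⟩
      · rw [List.getLast?_eq_some_getLast hHne]
        simpa
      · rw [List.head?_append, List.head?_eq_some_head hHne]
        simpa
      · simpa) hC (by
      have e1 : (Q' ++ ([z₁, z₂] ++ (H ++ [z₃, z₄]))).head hC = s := by
        rw [List.head_append_of_ne_nil hQne]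
        exact (List.head_eq_iff_head?_eq_some hQne).2 hs'
      have e2 : (Q' ++ ([z₁, z₂] ++ (H ++ [z₃, z₄]))).getLast hC = z₄ := by
        simp
      rw [e1, e2]
      exact g6)
  refine ⟨f, hf, fun p hp x y hxy => hf' x y ?_⟩
  exact (hxy.trans (hinf' p hp)).trans (List.prefix_append _ _).isInfix

lemma exists_path_cover {F : V → V → Prop} (r : V → ℕ) (hr : ∀ x y, F x y → r x < r y)
    (hF : ∀ x x' y, F x y → F x' y → x = x') (hF' : ∀ x y y', F x y → F x y' → y = y')
    (S : Finset V) :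
    ∃ L : List (List V), (∀ p ∈ L, p.IsChain F ∧ p ≠ []) ∧ L.flatten.Nodup ∧
      L.flatten.toFinset = S ∧ (∀ x ∈ S, ∀ y ∈ S, F x y → ∃ p ∈ L, [x, y] <:+: p) ∧
      L.length = #{x ∈ S | ∀ y ∈ S, ¬ F x y} := by
  induction S using Finset.induction_on_min_value r with
  | empty => exact ⟨[], by simp⟩
  | insert v S hv hmin ih =>
    obtain ⟨L, h1, h2, h3, h4, h5⟩ := ih
    have hnv : ∀ x ∈ insert v S, ¬ F x v := by
      intro x hx hxv
      have := hr x v hxv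
      rcases mem_insert.1 hx with rfl | hx
      · omega
      · have := hmin x hx
        omega
    have hvL : v ∉ L.flatten := by rwa [← List.mem_toFinset, h3]
    by_cases hsink : ∀ y ∈ S, ¬ F v y
    · refine ⟨[v] :: L, ?_, ?_, ?_, ?_, ?_⟩
      · intro p hp
        rcases List.mem_cons.1 hp with rfl | hp
        · simp
        · exact h1 p hp
      · simpa using ⟨by simpa using hvL, h2⟩
      · rw [List.flatten_cons, List.toFinset_append, h3]
        simp
      · intro x hx y hy hxy
        rcases mem_insert.1 hy with rfl | hyS
        · exact absurd hxy (hnv x hx)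
        rcases mem_insert.1 hx with rfl | hxS
        · exact absurd hxy (hsink y hyS)
        obtain ⟨p, hp, hp'⟩ := h4 x hxS y hyS hxy
        exact ⟨p, List.mem_cons_of_mem _ hp, hp'⟩
      · rw [List.length_cons, h5, ← card_insert_of_notMem (a := v) (by simp [hv])]
        congr 1
        ext x
        simp only [mem_insert, mem_filter]
        constructor
        · rintro (rfl | ⟨hx, hx'⟩)
          · refine ⟨Or.inl rfl, ?_⟩
            rintro y (rfl | hy)
            · exact hnv y (mem_insert_self _ _)
            · exact hsink y hy
          · refine ⟨Or.inr hx, ?_⟩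
            rintro y (rfl | hy)
            · exact hnv x (mem_insert_of_mem hx)
            · exact hx' y hy
        · rintro ⟨rfl | hx, hx'⟩
          · exact Or.inl rfl
          · exact Or.inr ⟨hx, fun y hy => hx' y (Or.inr hy)⟩
    · push Not at hsink
      obtain ⟨y, hy, hvy⟩ := hsink
      have hyL : y ∈ L.flatten := by rwa [← List.mem_toFinset, h3]
      obtain ⟨p, hp, hyp⟩ := List.mem_flatten.1 hyL
      obtain ⟨l, q, rfl⟩ := List.append_of_mem hyp
      obtain rfl : l = [] := by
        rcases List.eq_nil_or_concat l with h | ⟨l', x', rfl⟩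
        · exact h
        · exfalso
          have hch := (h1 _ hp).1
          rw [List.concat_eq_append, List.append_assoc, List.singleton_append,
            List.isChain_append_cons_cons] at hch
          obtain rfl := hF _ _ _ hch.2.1 hvy
          exact hvL (List.mem_flatten_of_mem hp (by simp))
      rw [List.nil_append] at hp
      obtain ⟨L₁, L₂, rfl⟩ := List.append_of_mem hp
      have hperm : (L₁ ++ (v :: y :: q) :: L₂).flatten.Perm
          (v :: (L₁ ++ (y :: q) :: L₂).flatten) := by
        simp only [List.flatten_append, List.flatten_cons, List.cons_append]
        exact List.perm_middle
      refine ⟨L₁ ++ (v :: y :: q) :: L₂, ?_, ?_, ?_, ?_, ?_⟩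
      · intro p' hp'
        rw [List.mem_append, List.mem_cons] at hp'
        rcases hp' with h | rfl | h
        · exact h1 p' (by simp [h])
        · refine ⟨?_, by simp⟩
          rw [List.isChain_cons_cons]
          exact ⟨hvy, (h1 _ hp).1⟩
        · exact h1 p' (by simp [h])
      · rw [hperm.nodup_iff]
        exact List.nodup_cons.2 ⟨hvL, h2⟩
      · rw [List.toFinset_eq_of_perm _ _ hperm, List.toFinset_cons, h3]
      · intro x hx y' hy' hxy
        rcases mem_insert.1 hy' with rfl | hy'
        · exact absurd hxy (hnv x hx)
        rcases mem_insert.1 hx with rfl | hx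
        · obtain rfl := hF' _ _ _ hxy hvy
          exact ⟨x :: y' :: q, by simp, ⟨[], q, rfl⟩⟩
        obtain ⟨p', hp', hxp⟩ := h4 x hx y' hy' hxy
        rw [List.mem_append, List.mem_cons] at hp'
        rcases hp' with h | rfl | h
        · exact ⟨p', by simp [h], hxp⟩
        · exact ⟨v :: y :: q, by simp, hxp.trans (List.suffix_cons _ _).isInfix⟩
        · exact ⟨p', by simp [h], hxp⟩
      · rw [List.length_append, List.length_cons] at h5 ⊢
        rw [h5]
        congr 1
        ext x
        simp only [mem_filter, mem_insert]
        constructor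
        · rintro ⟨hx, hx'⟩
          refine ⟨Or.inr hx, ?_⟩
          rintro z (rfl | hz)
          · exact hnv x (mem_insert_of_mem hx)
          · exact hx' z hz
        · rintro ⟨rfl | hx, hx'⟩
          · exact absurd hvy (hx' y (Or.inr hy))
          · exact ⟨hx, fun z hz => hx' z (Or.inr hz)⟩

/-- Greedy edge colouring with few edges in every colour class. -/
lemma exists_bounded_edge_coloring (E : Finset (V × V)) {D s Q : ℕ}
    (hD : ∀ v, #{e ∈ E | e.1 = v ∨ e.2 = v} ≤ D) (hQ : #E < s * (Q - 2 * D)) :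
    ∃ col : V × V → ℕ, (∀ e ∈ E, col e < Q) ∧
      (∀ e ∈ E, ∀ e' ∈ E, e ≠ e' → col e = col e' →
        ¬ (e.1 = e'.1 ∨ e.2 = e'.1) ∧ ¬ (e.1 = e'.2 ∨ e.2 = e'.2)) ∧
      ∀ q, #{e ∈ E | col e = q} ≤ s := by
  induction E using Finset.induction_on with
  | empty => exact ⟨fun _ => 0, by simp⟩
  | insert e E he ih =>
    have hle : #E ≤ #(insert e E) := card_le_card (subset_insert _ _)
    obtain ⟨col, c1, c2, c3⟩ := ih
      (fun v => (card_le_card (filter_subset_filter _ (subset_insert _ _))).trans (hD v))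
      (hle.trans_lt hQ)
    set B1 := ({e' ∈ E | e'.1 = e.1 ∨ e'.2 = e.1} ∪ {e' ∈ E | e'.1 = e.2 ∨ e'.2 = e.2}).image col
      with hB1
    set B2 := {q ∈ range Q | s ≤ #{e' ∈ E | col e' = q}} with hB2
    have hB1c : #B1 ≤ 2 * D := by
      have h1 : ∀ v, #{e' ∈ E | e'.1 = v ∨ e'.2 = v} ≤ D := fun v =>
        (card_le_card (filter_subset_filter _ (subset_insert _ _))).trans (hD v)
      have h2 := h1 e.1
      have h3 := h1 e.2
      have h4 : #B1 ≤ _ := card_image_le.trans (card_union_le _ _)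
      omega
    have hB2c : s * #B2 ≤ #E := by
      have h1 : ∑ q ∈ B2, #{e' ∈ E | col e' = q} ≤ #E := by
        rw [← card_biUnion]
        · apply card_le_card
          intro x hx
          simp only [mem_biUnion, mem_filter] at hx
          obtain ⟨_, _, h, _⟩ := hx
          exact h
        · intro q _ q' _ hqq
          rw [Function.onFun, disjoint_left]
          intro x hx hx'
          exact hqq ((mem_filter.1 hx).2.symm.trans (mem_filter.1 hx').2)
      refine le_trans ?_ h1
      rw [mul_comm, ← smul_eq_mul]
      apply card_nsmul_le_sum
      intro q hq
      exact (mem_filter.1 hq).2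
    have hB2lt : #B2 < Q - 2 * D := by
      by_contra h
      rw [not_lt] at h
      have := Nat.mul_le_mul_left s h
      omega
    obtain ⟨q, hq, hq'⟩ : ∃ q ∈ range Q, q ∉ B1 ∪ B2 := by
      apply exists_mem_notMem_of_card_lt_card
      rw [card_range]
      have := card_union_le B1 B2
      omega
    rw [mem_union, not_or] at hq'
    have hcol : ∀ e' ∈ E, Function.update col e q e' = col e' := by
      intro e' he'
      rw [Function.update_of_ne]
      rintro rfl
      exact he he'
    have key : ∀ e' ∈ E, col e' = q →
        ¬ (e'.1 = e.1 ∨ e'.2 = e.1) ∧ ¬ (e'.1 = e.2 ∨ e'.2 = e.2) := by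
      intro e' he' hce
      by_contra hcon
      apply hq'.1
      rw [hB1, mem_image]
      refine ⟨e', ?_, hce⟩
      rw [mem_union, mem_filter, mem_filter]
      tauto
    refine ⟨Function.update col e q, ?_, ?_, ?_⟩
    · intro e' he'
      rcases mem_insert.1 he' with rfl | h
      · simpa using hq
      · rw [hcol e' h]
        exact c1 e' h
    · intro e₁ h₁ e₂ h₂ hne heq
      rcases mem_insert.1 h₁ with rfl | g₁ <;> rcases mem_insert.1 h₂ with rfl | g₂
      · exact absurd rfl hne
      · rw [hcol e₂ g₂, Function.update_self] at heq
        have := key e₂ g₂ heq.symm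
        grind
      · rw [hcol e₁ g₁, Function.update_self] at heq
        exact key e₁ g₁ heq
      · rw [hcol e₁ g₁, hcol e₂ g₂] at heq
        exact c2 e₁ g₁ e₂ g₂ hne heq
    · intro q'
      rw [filter_insert]
      have hfil : {e' ∈ E | Function.update col e q e' = q'} = {e' ∈ E | col e' = q'} := by
        apply filter_congr
        intro x hx
        rw [hcol x hx]
      rw [hfil, Function.update_self]
      split_ifs with h
      · subst h
        have : ¬ s ≤ #{e' ∈ E | col e' = q} := fun h => hq'.2 (mem_filter.2 ⟨hq, h⟩)
        have := card_insert_le e {e' ∈ E | col e' = q}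
        omega
      · exact c3 q'

lemma exists_regular_extension [Fintype V] (Δ : ℕ) (A : V → V → ℕ) (hrow : ∀ x, ∑ y, A x y ≤ Δ)
    (hcol : ∀ y, ∑ x, A x y ≤ Δ) :
    ∃ B : V → V → ℕ, (∀ x y, A x y ≤ B x y) ∧ (∀ x, ∑ y, B x y = Δ) ∧ ∀ y, ∑ x, B x y = Δ := by
  induction hd : Fintype.card V * Δ - ∑ x, ∑ y, A x y generalizing A with
  | zero =>
    have hsum : ∑ x, ∑ y, A x y = ∑ _x : V, Δ := by
      have := sum_le_sum (fun x (_ : x ∈ univ) => hrow x)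
      simp only [sum_const, smul_eq_mul, card_univ] at this ⊢
      omega
    refine ⟨A, fun _ _ => le_rfl, fun x => ?_, fun y => ?_⟩
    · exact (sum_eq_sum_iff_of_le (fun x _ => hrow x)).1 hsum x (mem_univ x)
    · rw [sum_comm] at hsum
      exact (sum_eq_sum_iff_of_le (fun x _ => hcol x)).1 hsum y (mem_univ y)
  | succ d ih =>
    have hlt : ∑ x, ∑ y, A x y < ∑ _x : V, Δ := by
      simp only [sum_const, smul_eq_mul, card_univ]
      omega
    obtain ⟨x₀, -, hx₀⟩ := exists_lt_of_sum_lt hlt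
    have hlt' := hlt
    rw [sum_comm] at hlt'
    obtain ⟨y₀, -, hy₀⟩ := exists_lt_of_sum_lt hlt'
    set A' : V → V → ℕ := fun x y => A x y + if x = x₀ ∧ y = y₀ then 1 else 0 with hA'
    have hr' : ∀ x, ∑ y, A' x y = ∑ y, A x y + if x = x₀ then 1 else 0 := by
      intro x
      simp only [hA', sum_add_distrib]
      by_cases h : x = x₀ <;> simp [h]
    have hc' : ∀ y, ∑ x, A' x y = ∑ x, A x y + if y = y₀ then 1 else 0 := by
      intro y
      simp only [hA', sum_add_distrib]
      by_cases h : y = y₀ <;> simp [h]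
    obtain ⟨B, b1, b2, b3⟩ := ih A' (by
        intro x
        rw [hr']
        split_ifs with h
        · subst h
          exact hx₀
        · exact hrow x) (by
        intro y
        rw [hc']
        split_ifs with h
        · subst h
          exact hy₀
        · exact hcol y) (by
        simp only [hr', sum_add_distrib, sum_ite_eq', mem_univ, if_true]
        omega)
    exact ⟨B, fun x y => (Nat.le_add_right _ _).trans (b1 x y), b2, b3⟩

lemma exists_perms_of_regular [Fintype V] (Δ : ℕ) (A : V → V → ℕ) (hrow : ∀ x, ∑ y, A x y = Δ)
    (hcol : ∀ y, ∑ x, A x y = Δ) :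
    ∃ σ : ℕ → Equiv.Perm V, ∀ x y, 0 < A x y → ∃ t < Δ, σ t x = y := by
  induction Δ generalizing A with
  | zero =>
    refine ⟨fun _ => 1, fun x y h => ?_⟩
    have := single_le_sum (fun y _ => Nat.zero_le (A x y)) (mem_univ y)
    rw [hrow] at this
    omega
  | succ Δ ih =>
    obtain ⟨f, hf, hfA⟩ := (all_card_le_biUnion_card_iff_exists_injective
      (fun x => {y | 0 < A x y})).1 (by
        intro s
        have h1 : ∑ x ∈ s, ∑ y, A x y = #s * (Δ + 1) := by
          rw [sum_congr rfl (fun x _ => hrow x), sum_const, smul_eq_mul]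
        have h2 : ∑ x ∈ s, ∑ y, A x y ≤ ∑ x, ∑ y ∈ s.biUnion (fun x => {y | 0 < A x y}), A x y := by
          refine (sum_le_sum ?_).trans (sum_le_sum_of_subset (subset_univ s))
          intro x hx
          apply le_of_eq
          symm
          apply sum_subset (subset_univ _)
          intro y _ hy
          by_contra h
          apply hy
          rw [mem_biUnion]
          exact ⟨x, hx, by simpa [Nat.pos_iff_ne_zero] using h⟩
        rw [h1, sum_comm, sum_congr rfl (fun y _ => hcol y), sum_const, smul_eq_mul] at h2
        exact Nat.le_of_mul_le_mul_right h2 (Nat.succ_pos Δ))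
    have hfA' : ∀ x, 0 < A x (f x) := fun x => by simpa using hfA x
    let τ : Equiv.Perm V := Equiv.ofBijective f (Finite.injective_iff_bijective.1 hf)
    set A' : V → V → ℕ := fun x y => A x y - if y = f x then 1 else 0 with hA'
    have hadd : ∀ x y, A x y = A' x y + if y = f x then 1 else 0 := by
      intro x y
      simp only [hA']
      split_ifs with h
      · have := hfA' x
        subst h
        omega
      · rfl
    obtain ⟨σ, hσ⟩ := ih A' (by
        intro x
        have := hrow x
        simp only [hadd x, sum_add_distrib, sum_ite_eq', mem_univ, if_true] at this
        omega) (by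
        intro y
        have := hcol y
        have h2 : ∑ x, (if y = f x then 1 else 0) = 1 := by
          obtain ⟨x₀, rfl⟩ := (Finite.injective_iff_bijective.1 hf).2 y
          simp [hf.eq_iff]
        simp only [hadd _ y, sum_add_distrib, h2] at this
        omega)
    refine ⟨fun t => if t = Δ then τ else σ t, fun x y hxy => ?_⟩
    by_cases h : y = f x
    · exact ⟨Δ, Nat.lt_succ_self Δ, by simp [h, τ]⟩
    · obtain ⟨t, ht, ht'⟩ := hσ x y (by simpa [hA', h] using hxy)
      refine ⟨t, ht.trans (Nat.lt_succ_self Δ), ?_⟩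
      simpa [ht.ne] using ht'

/-- König's edge colouring theorem: a relation of maximum in- and outdegree at most `Δ` is covered
by `Δ` permutations. -/
lemma exists_perms_cover [Fintype V] (Δ : ℕ) (R : V → V → Prop) (hrow : ∀ x, #{y | R x y} ≤ Δ)
    (hcol : ∀ y, #{x | R x y} ≤ Δ) :
    ∃ σ : ℕ → Equiv.Perm V, ∀ x y, R x y → ∃ t < Δ, σ t x = y := by
  obtain ⟨B, b1, b2, b3⟩ := exists_regular_extension Δ (fun x y => if R x y then 1 else 0)
    (by simpa using hrow) (by simpa using hcol)
  obtain ⟨σ, hσ⟩ := exists_perms_of_regular Δ B b2 b3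
  refine ⟨σ, fun x y h => hσ x y ?_⟩
  have := b1 x y
  simp only [h, if_true] at this
  omega

/-- A random colouring of a ground set splits a small family of sets evenly. -/
lemma exists_balanced_coloring [Fintype V] {ι : Type*} [Fintype ι] (S : ι → Finset V) {k : ℕ}
    [NeZero k] {ε : ℝ} (hε : 0 < ε) (hε1 : ε ≤ 1)
    (hcard : 2 * Fintype.card ι * k < Real.exp (ε ^ 2 / 4 * Fintype.card V)) :
    ∃ c : V → ZMod k, ∀ j i, |(#{y ∈ S j | c y = i} : ℝ) - #(S j) / k| ≤ ε * Fintype.card V := by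
  by_contra! hbad
  have hk : (0 : ℝ) < k := Nat.cast_pos.2 (NeZero.pos k)
  have hk1 : (1 : ℝ) / k ≤ 1 := by
    rw [div_le_one hk]
    exact_mod_cast NeZero.one_le
  have hk0 : (0 : ℝ) ≤ 1 / k := by positivity
  set n := Fintype.card V with hn
  set lam : ℝ := ε / 2 with hlam
  let dev : ZMod k → ZMod k → ℝ := fun i a => (if a = i then 1 else 0) - 1 / k
  have hdev : ∀ i a, |dev i a| ≤ 1 := by
    intro i a
    rw [abs_le]
    simp only [dev]
    split_ifs <;> constructor <;> linarith
  have hdev0 : ∀ i, ∑ a, dev i a = 0 := by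
    intro i
    simp only [dev, sum_sub_distrib, sum_ite_eq', mem_univ, if_true, sum_const, card_univ,
      ZMod.card, nsmul_eq_mul]
    field_simp
    ring
  have hmgf : ∀ (s : ℝ) i, |s| ≤ lam → ∑ a, Real.exp (s * dev i a) ≤ k * Real.exp (lam ^ 2) := by
    intro s i hs
    have hle : ∀ a, Real.exp (s * dev i a) ≤ 1 + s * dev i a + lam ^ 2 := by
      intro a
      have h1 : |s * dev i a| ≤ lam := by
        rw [abs_mul]
        exact (mul_le_of_le_one_right (abs_nonneg _) (hdev i a)).trans hs
      have h2 := abs_le.1 (Real.abs_exp_sub_one_sub_id_le (h1.trans (by linarith)))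
      have h3 : (s * dev i a) ^ 2 ≤ lam ^ 2 := sq_le_sq' (abs_le.1 h1).1 (abs_le.1 h1).2
      linarith [h2.2]
    calc ∑ a, Real.exp (s * dev i a) ≤ ∑ a, (1 + s * dev i a + lam ^ 2) :=
          sum_le_sum fun a _ => hle a
      _ = k * (lam ^ 2 + 1) := by
          simp only [sum_add_distrib, ← mul_sum, hdev0, sum_const, card_univ, ZMod.card,
            nsmul_eq_mul]
          ring
      _ ≤ k * Real.exp (lam ^ 2) :=
          mul_le_mul_of_nonneg_left (Real.add_one_le_exp _) hk.le
  have hk_exp : (k : ℝ) ≤ k * Real.exp (lam ^ 2) :=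
    le_mul_of_one_le_right hk.le (Real.one_le_exp (by positivity))
  let X : ι → ZMod k → (V → ZMod k) → ℝ := fun j i c => ∑ y ∈ S j, dev i (c y)
  have hX : ∀ j i c, X j i c = (#{y ∈ S j | c y = i} : ℝ) - #(S j) / k := by
    intro j i c
    simp only [X, dev, sum_sub_distrib, sum_const, nsmul_eq_mul, sum_boole]
    ring
  have htot : ∀ (s : ℝ) j i, |s| ≤ lam →
      ∑ c : V → ZMod k, Real.exp (s * X j i c) ≤ (k * Real.exp (lam ^ 2)) ^ n := by
    intro s j i hs
    let g : V → ZMod k → ℝ := fun y a => if y ∈ S j then Real.exp (s * dev i a) else 1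
    have h1 : ∀ c : V → ZMod k, Real.exp (s * X j i c) = ∏ y, g y (c y) := by
      intro c
      simp only [X, g, mul_sum, Real.exp_sum]
      rw [prod_ite_mem, univ_inter]
    rw [sum_congr rfl (fun c _ => h1 c)]
    have h2 := prod_univ_sum (fun _ : V => (univ : Finset (ZMod k))) g
    rw [Fintype.piFinset_univ] at h2
    rw [← h2, hn, ← card_univ, ← prod_const]
    apply prod_le_prod
    · intro y _
      apply sum_nonneg
      intro a _
      simp only [g]
      split_ifs <;> positivity
    · intro y _
      by_cases hy : y ∈ S j
      · simpa only [g, hy, if_true] using hmgf s i hs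
      · simpa [g, hy, ZMod.card] using hk_exp
  have hbig : ∀ c : V → ZMod k, Real.exp (lam * (ε * n)) ≤
      ∑ j, ∑ i, (Real.exp (lam * X j i c) + Real.exp (-lam * X j i c)) := by
    intro c
    obtain ⟨j, i, hji⟩ := hbad c
    rw [← hX] at hji
    have hl : 0 < lam := by positivity
    have h1 : Real.exp (lam * (ε * n)) ≤ Real.exp (lam * X j i c) + Real.exp (-lam * X j i c) := by
      rcases le_abs.1 hji.le with h | h
      · have : Real.exp (lam * (ε * n)) ≤ Real.exp (lam * X j i c) :=
          Real.exp_le_exp.2 (mul_le_mul_of_nonneg_left h hl.le)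
        linarith [Real.exp_pos (-lam * X j i c)]
      · have : Real.exp (lam * (ε * n)) ≤ Real.exp (-lam * X j i c) := by
          apply Real.exp_le_exp.2
          rw [neg_mul, ← mul_neg]
          exact mul_le_mul_of_nonneg_left h hl.le
        linarith [Real.exp_pos (lam * X j i c)]
    refine h1.trans ?_
    refine le_trans ?_ (single_le_sum (f := fun j => ∑ i, (Real.exp (lam * X j i c) +
      Real.exp (-lam * X j i c))) (fun j _ => sum_nonneg fun i _ => by positivity) (mem_univ j))
    exact single_le_sum (f := fun i => (Real.exp (lam * X j i c) +
      Real.exp (-lam * X j i c))) (fun i _ => by positivity) (mem_univ i)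
  have hsum := sum_le_sum (fun c (_ : c ∈ (univ : Finset (V → ZMod k))) => hbig c)
  have hright : ∑ c : V → ZMod k, ∑ j, ∑ i,
      (Real.exp (lam * X j i c) + Real.exp (-lam * X j i c)) ≤
      2 * Fintype.card ι * k * (k * Real.exp (lam ^ 2)) ^ n := by
    rw [sum_comm]
    have hj : ∀ j, ∑ c : V → ZMod k, ∑ i,
        (Real.exp (lam * X j i c) + Real.exp (-lam * X j i c)) ≤
        2 * k * (k * Real.exp (lam ^ 2)) ^ n := by
      intro j
      rw [sum_comm]
      have hi : ∀ i, ∑ c : V → ZMod k,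
          (Real.exp (lam * X j i c) + Real.exp (-lam * X j i c)) ≤
          2 * (k * Real.exp (lam ^ 2)) ^ n := by
        intro i
        rw [sum_add_distrib]
        have hl : |lam| ≤ lam := (abs_of_pos (by positivity)).le
        have h1 := htot lam j i hl
        have h2 := htot (-lam) j i (by rwa [abs_neg])
        linarith
      refine (sum_le_sum fun i _ => hi i).trans (le_of_eq ?_)
      simp only [sum_const, card_univ, ZMod.card, nsmul_eq_mul]
      ring
    refine (sum_le_sum fun j _ => hj j).trans (le_of_eq ?_)
    simp only [sum_const, card_univ, nsmul_eq_mul]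
    ring
  have hfin := hsum.trans hright
  rw [sum_const, card_univ, Fintype.card_fun, ZMod.card, nsmul_eq_mul, mul_pow, ← Real.exp_nat_mul]
    at hfin
  push_cast at hfin
  have hkn : (0 : ℝ) < (k : ℝ) ^ n := by positivity
  have h1 : Real.exp (lam * (ε * n)) ≤ 2 * Fintype.card ι * k * Real.exp (n * lam ^ 2) := by
    refine le_of_mul_le_mul_left (hfin.trans (le_of_eq ?_)) hkn
    ring
  have h2 : Real.exp (lam * (ε * n)) =
      Real.exp (ε ^ 2 / 4 * n) * Real.exp (n * lam ^ 2) := by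
    rw [← Real.exp_add]
    congr 1
    simp only [hlam]
    ring
  rw [h2] at h1
  exact absurd (le_of_mul_le_mul_right h1 (Real.exp_pos _)) (not_le.2 hcard)

lemma outN_le_add_card_sdiff (G : V → V → Prop) (v : V) (S T : Finset V) :
    outN G v S ≤ outN G v T + #(S \ T) := by
  unfold outN
  refine (card_le_card ?_).trans (card_union_le _ _)
  intro x hx
  rw [mem_filter] at hx
  rw [mem_union, mem_filter, mem_sdiff]
  tauto

lemma inN_le_add_card_sdiff (G : V → V → Prop) (v : V) (S T : Finset V) :
    inN G v S ≤ inN G v T + #(S \ T) :=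
  outN_le_add_card_sdiff (fun x y => G y x) v S T

lemma outN_le_add_outN_sdiff (G : V → V → Prop) (v : V) (S T : Finset V) :
    outN G v S ≤ outN G v T + outN G v (S \ T) := by
  unfold outN
  refine (card_le_card ?_).trans (card_union_le _ _)
  intro x hx
  rw [mem_filter] at hx
  rw [mem_union, mem_filter, mem_filter, mem_sdiff]
  tauto

lemma inN_le_add_inN_sdiff (G : V → V → Prop) (v : V) (S T : Finset V) :
    inN G v S ≤ inN G v T + inN G v (S \ T) :=
  outN_le_add_outN_sdiff (fun x y => G y x) v S T

lemma card_le_outN_add_inN {G : V → V → Prop} (hG : IsTournament G) (S : Finset V) (v : V) :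
    outN G v S + inN G v S ≤ #S ∧ #S ≤ outN G v S + inN G v S + 1 := by
  rw [outN_add_inN hG]
  exact ⟨card_le_card (erase_subset _ _), by
    have := pred_card_le_card_erase (s := S) (a := v)
    omega⟩

/-- In a regular tournament every small matching is contained in a Hamilton cycle. -/
lemma exists_isHamCycle_of_matching [Fintype V] {G : V → V → Prop} (hG : IsTournament G)
    (hreg : ∀ v, 2 * outN G v univ + 1 = Fintype.card V ∧ 2 * inN G v univ + 1 = Fintype.card V)
    (hn : 1000000 ≤ Fintype.card V) {Z : Finset V}
    (hZo : ∀ v, 998 * Fintype.card V ≤ 1000000 * outN G v Z ∧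
      1000000 * outN G v Z ≤ 1002 * Fintype.card V)
    (hZi : ∀ v, 998 * Fintype.card V ≤ 1000000 * inN G v Z ∧
      1000000 * inN G v Z ≤ 1002 * Fintype.card V)
    (E : Finset (V × V)) (hE : ∀ e ∈ E, G e.1 e.2)
    (hdisj : ∀ e ∈ E, ∀ e' ∈ E, e ≠ e' →
      ¬ (e.1 = e'.1 ∨ e.2 = e'.1) ∧ ¬ (e.1 = e'.2 ∨ e.2 = e'.2))
    (hcard : 1000000 * #E ≤ Fintype.card V) :
    ∃ f : ZMod (Fintype.card V) → V, IsHamCycle G f ∧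
      ∀ e ∈ E, ∃ i, f i = e.1 ∧ f (i + 1) = e.2 := by
  set L : List (List V) := E.toList.map (fun e => [e.1, e.2]) with hL
  set X := L.flatten.toFinset with hX
  have hXsub : X ⊆ E.image Prod.fst ∪ E.image Prod.snd := by
    intro x hx
    simp only [hX, hL, List.mem_toFinset, List.mem_flatten, List.mem_map, mem_toList] at hx
    obtain ⟨_, ⟨e, he, rfl⟩, hx⟩ := hx
    simp only [List.mem_cons, List.not_mem_nil, or_false] at hx
    rw [mem_union, mem_image, mem_image]
    rcases hx with rfl | rfl
    · exact Or.inl ⟨e, he, rfl⟩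
    · exact Or.inr ⟨e, he, rfl⟩
  have hXc : #X ≤ 2 * #E := by
    have h1 := (card_le_card hXsub).trans (card_union_le _ _)
    have h2 := card_image_le (s := E) (f := Prod.fst)
    have h3 := card_image_le (s := E) (f := Prod.snd)
    omega
  have hZX : ∀ T : Finset V, #(T \ (T \ X)) ≤ #X := by
    intro T
    apply card_le_card
    intro x
    simp only [mem_sdiff]
    tauto
  have hVne : Nonempty V := Fintype.card_pos_iff.1 (by omega)
  obtain ⟨v₀⟩ := hVne
  have hZc := card_le_outN_add_inN hG Z v₀
  have hZ0 := hZo v₀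
  have hZ1 := hZi v₀
  have hZc' : #(Z \ X) ≤ #Z := card_le_card sdiff_subset
  have hZc2 : #Z ≤ #(Z \ X) + #X := by
    have := card_le_card_sdiff_add_card (s := Z) (t := X)
    omega
  set Y := (univ \ Z) \ X with hY
  have hYc : #Y ≤ Fintype.card V := card_le_univ Y
  have hYc2 : Fintype.card V ≤ #Y + #X + #Z := by
    have h1 := card_le_card_sdiff_add_card (s := univ \ Z) (t := X)
    have h2 := card_le_card_sdiff_add_card (s := univ) (t := Z)
    rw [← hY] at h1
    rw [card_univ] at h2
    omega
  obtain ⟨f, hf, hf'⟩ := exists_isHamCycle_of_paths hG (Y := Y) (Z := Z \ X) (by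
      intro v
      have h1 := outN_le_add_outN_sdiff G v univ Z
      have h2 := outN_le_add_card_sdiff G v (univ \ Z) Y
      have h3 := inN_le_add_inN_sdiff G v univ Z
      have h4 := inN_le_add_card_sdiff G v (univ \ Z) Y
      have h5 := hZX (univ \ Z)
      have h6 := hreg v
      have h7 := hZo v
      have h8 := hZi v
      rw [← hY] at h5
      omega) (by
      intro v
      have h2 := outN_le_add_card_sdiff G v Z (Z \ X)
      have h4 := inN_le_add_card_sdiff G v Z (Z \ X)
      have h5 := hZX Z
      have h7 := hZo v
      have h8 := hZi v
      omega) (by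
      rw [disjoint_left]
      intro x hx hx'
      rw [hY, mem_sdiff, mem_sdiff] at hx
      exact hx.1.2 (mem_sdiff.1 hx').1) (by omega) L (by
      intro p hp
      rw [hL, List.mem_map] at hp
      obtain ⟨e, he, rfl⟩ := hp
      simpa using hE e (mem_toList.1 he)) (by
      rw [List.nodup_flatten, hL, List.pairwise_map]
      refine ⟨fun l hl => ?_, (nodup_toList E).pairwise_of_forall_ne ?_⟩
      · rw [List.mem_map] at hl
        obtain ⟨e, he, rfl⟩ := hl
        simpa using hG.ne (hE e (mem_toList.1 he))
      · intro e he e' he' hne x hx hx'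
        have := hdisj e (mem_toList.1 he) e' (mem_toList.1 he') hne
        simp only [List.mem_cons, List.not_mem_nil, or_false] at hx hx'
        grind) (by
      intro x hx hx'
      exact (mem_sdiff.1 hx').2 (List.mem_toFinset.2 hx)) (by
      intro x hx hx'
      exact (mem_sdiff.1 hx').2 (List.mem_toFinset.2 hx)) (by
      have : L.length = #E := by rw [hL, List.length_map, length_toList]
      omega)
  refine ⟨f, hf, fun e he => hf' [e.1, e.2] ?_ e.1 e.2 List.infix_rfl⟩
  rw [hL, List.mem_map]
  exact ⟨e, mem_toList.2 he, rfl⟩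

/-- In a regular tournament, a sparse set of edges can be covered by few Hamilton cycles. -/
lemma exists_cover_of_sparse [Fintype V] {G : V → V → Prop} (hG : IsTournament G)
    (hreg : ∀ v, 2 * outN G v univ + 1 = Fintype.card V ∧ 2 * inN G v univ + 1 = Fintype.card V)
    (hn : 1000000 ≤ Fintype.card V) {Z : Finset V}
    (hZo : ∀ v, 998 * Fintype.card V ≤ 1000000 * outN G v Z ∧
      1000000 * outN G v Z ≤ 1002 * Fintype.card V)
    (hZi : ∀ v, 998 * Fintype.card V ≤ 1000000 * inN G v Z ∧
      1000000 * inN G v Z ≤ 1002 * Fintype.card V)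
    {H : V → V → Prop} (hHG : ∀ x y, H x y → G x y) {D : ℕ} (hDo : ∀ x, #{y | H x y} ≤ D)
    (hDi : ∀ y, #{x | H x y} ≤ D) :
    ∃ C : Fin (2000004 * D + 1) → ZMod (Fintype.card V) → V, (∀ j, IsHamCycle G (C j)) ∧
      ∀ x y, H x y → ∃ j i, C j i = x ∧ C j (i + 1) = y := by
  set E : Finset (V × V) := {e | H e.1 e.2} with hE
  have hmemE : ∀ e, e ∈ E ↔ H e.1 e.2 := by simp [hE]
  have hdeg : ∀ v, #{e ∈ E | e.1 = v ∨ e.2 = v} ≤ 2 * D := by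
    intro v
    have hsub : ({e ∈ E | e.1 = v ∨ e.2 = v} : Finset (V × V)) ⊆
        ({y | H v y} : Finset V).image (fun y => (v, y)) ∪
        ({x | H x v} : Finset V).image (fun x => (x, v)) := by
      rintro ⟨x, y⟩ h
      simp only [mem_filter, hmemE] at h
      simp only [mem_union, mem_image, mem_filter, mem_univ, true_and, Prod.mk.injEq]
      rcases h with ⟨h, rfl | rfl⟩
      · exact Or.inl ⟨y, h, rfl, rfl⟩
      · exact Or.inr ⟨x, h, rfl, rfl⟩
    have h1 := (card_le_card hsub).trans (card_union_le _ _)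
    have h2 := card_image_le (s := ({y | H v y} : Finset V)) (f := fun y => (v, y))
    have h3 := card_image_le (s := ({x | H x v} : Finset V)) (f := fun x => (x, v))
    have := hDo v
    have := hDi v
    omega
  have hEc : #E ≤ Fintype.card V * D := by
    rw [card_eq_sum_card_fiberwise (f := Prod.fst) (t := univ) (fun _ _ => by simp), ← card_univ,
      ← smul_eq_mul]
    apply sum_le_card_nsmul
    intro x _
    refine (card_le_card_of_injOn Prod.snd ?_ ?_).trans (hDo x)
    · intro e he
      simp only [coe_filter, Set.mem_ofPred_eq, hmemE] at he
      simp only [coe_filter, Set.mem_ofPred_eq, mem_univ, true_and]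
      exact he.2 ▸ he.1
    · intro e he e' he' h
      simp only [coe_filter, Set.mem_ofPred_eq] at he he'
      exact Prod.ext (he.2.trans he'.2.symm) h
  set s := Fintype.card V / 1000000 with hs
  have hs1 : 1 ≤ s := by omega
  have hs2 : Fintype.card V ≤ 2000000 * s := by omega
  obtain ⟨col, c1, c2, c3⟩ := exists_bounded_edge_coloring E (D := 2 * D) (s := s)
    (Q := 2000004 * D + 1) hdeg (by
      have h1 : 2000004 * D + 1 - 2 * (2 * D) = 2000000 * D + 1 := by omega
      rw [h1]
      calc #E ≤ Fintype.card V * D := hEc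
        _ ≤ 2000000 * s * D := Nat.mul_le_mul_right _ hs2
        _ < s * (2000000 * D + 1) := by nlinarith)
  have hcyc : ∀ j : Fin (2000004 * D + 1), ∃ f : ZMod (Fintype.card V) → V, IsHamCycle G f ∧
      ∀ e ∈ E, col e = j → ∃ i, f i = e.1 ∧ f (i + 1) = e.2 := by
    intro j
    obtain ⟨f, hf, hf'⟩ := exists_isHamCycle_of_matching hG hreg hn hZo hZi {e ∈ E | col e = j}
      (fun e he => hHG _ _ ((hmemE e).1 (mem_filter.1 he).1))
      (fun e he e' he' hne => c2 e (mem_filter.1 he).1 e' (mem_filter.1 he').1 hne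
        ((mem_filter.1 he).2.trans (mem_filter.1 he').2.symm)) (by
        have := c3 j
        omega)
    exact ⟨f, hf, fun e he hj => hf' e (mem_filter.2 ⟨he, hj⟩)⟩
  choose C hC hC' using hcyc
  refine ⟨C, hC, fun x y hxy => ?_⟩
  have he : (x, y) ∈ E := (hmemE _).2 hxy
  exact ⟨⟨col (x, y), c1 _ he⟩, hC' _ _ he rfl⟩

/-- The position of the colour of `x` in the progression with start `i` and difference `d`. -/
def windowPos {k : ℕ} [Fact k.Prime] (c : V → ZMod k) (d i : ZMod k) (x : V) : ℕ :=
  ((c x - i) * d⁻¹).val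

section Window

variable {k : ℕ} [Fact k.Prime] {c : V → ZMod k} {d i : ZMod k}

lemma windowPos_eq_iff (hd : d ≠ 0) {x : V} {j : ℕ} (hj : j < k) :
    windowPos c d i x = j ↔ c x = i + j * d := by
  have h1 : windowPos c d i x = j ↔ (c x - i) * d⁻¹ = j := by
    unfold windowPos
    constructor
    · intro h
      rw [← h, ZMod.natCast_zmod_val]
    · intro h
      rw [h, ZMod.val_cast_of_lt hj]
  rw [h1, mul_inv_eq_iff_eq_mul₀ hd, sub_eq_iff_eq_add']

lemma windowPos_lt (x : V) : windowPos c d i x < k := ZMod.val_lt _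

lemma windowPos_succ (hd : d ≠ 0) {x y : V} (hxy : c y = c x + d)
    (hx : windowPos c d i x + 1 < k) : windowPos c d i y = windowPos c d i x + 1 := by
  have h1 := (windowPos_eq_iff hd (windowPos_lt x)).1 (rfl : windowPos c d i x = _)
  rw [windowPos_eq_iff hd hx, hxy, h1]
  push_cast
  ring

lemma outN_windowPos [Fintype V] (G : V → V → Prop) {a b : ℕ}
    (hout : ∀ v j, a ≤ outN G v {x | c x = j} ∧ outN G v {x | c x = j} ≤ b) (hd : d ≠ 0)
    {J : Finset ℕ} (hJ : ∀ j ∈ J, j < k) (v : V) :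
    #J * a ≤ outN G v {x | windowPos c d i x ∈ J} ∧
      outN G v {x | windowPos c d i x ∈ J} ≤ #J * b := by
  have h : outN G v {x | windowPos c d i x ∈ J} =
      ∑ j ∈ J, outN G v {x | c x = i + j * d} := by
    unfold outN
    rw [card_eq_sum_card_fiberwise (f := windowPos c d i) (t := J) (fun x hx => by
      simp only [coe_filter, Set.mem_ofPred_eq, mem_filter] at hx
      exact hx.1.2)]
    refine sum_congr rfl fun j hj => congrArg card ?_
    ext x
    simp only [mem_filter, mem_univ, true_and, ← windowPos_eq_iff hd (hJ j hj)]
    grind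
  rw [h]
  exact ⟨(card_nsmul_le_sum _ _ _ fun j _ => (hout v _).1),
    (sum_le_card_nsmul _ _ _ fun j _ => (hout v _).2)⟩

/-- A Hamilton cycle containing those pairs `(x, σ x)` that raise the colour of `x` by `d` and
do not meet the first classes or the last class of the progression `i, i + d, …`. -/
lemma exists_isHamCycle_of_window [Fintype V] [Nonempty V] {G : V → V → Prop} (hG : IsTournament G)
    {a b : ℕ} (hout : ∀ v j, a ≤ outN G v {x | c x = j} ∧ outN G v {x | c x = j} ≤ b)
    (hin : ∀ v j, a ≤ inN G v {x | c x = j} ∧ inN G v {x | c x = j} ≤ b)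
    (hk : 501 < k) (ha : 40 ≤ a) (hab : 39 * b ≤ 40 * a) (hd : d ≠ 0) (i : ZMod k)
    (σ : Equiv.Perm V) (hσ : #{x | ¬ (G x (σ x) ∧ c (σ x) = c x + d)} ≤ b) :
    ∃ f : ZMod (Fintype.card V) → V, IsHamCycle G f ∧
      ∀ x, G x (σ x) → c (σ x) = c x + d → 501 ≤ windowPos c d i x →
        windowPos c d i x + 1 < k → ∃ s, f s = x ∧ f (s + 1) = σ x := by
  set p := windowPos c d i with hp
  have hW : ∀ J : Finset ℕ, (∀ j ∈ J, j < k) → ∀ v,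
      (#J * a ≤ outN G v {x | p x ∈ J} ∧ outN G v {x | p x ∈ J} ≤ #J * b) ∧
      (#J * a ≤ inN G v {x | p x ∈ J} ∧ inN G v {x | p x ∈ J} ≤ #J * b) ∧
      outN G v {x | p x ∈ J} + inN G v {x | p x ∈ J} ≤ #{x | p x ∈ J} ∧
      #{x | p x ∈ J} ≤ outN G v {x | p x ∈ J} + inN G v {x | p x ∈ J} + 1 := fun J hJ v =>
    ⟨outN_windowPos G hout hd hJ v, outN_windowPos (fun x y => G y x) hin hd hJ v,
      card_le_outN_add_inN hG _ v⟩
  obtain ⟨v₀⟩ := ‹Nonempty V›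
  set F : V → V → Prop := fun x y => y = σ x ∧ G x y ∧ c y = c x + d ∧ 501 ≤ p x ∧ p x + 1 < k
    with hF
  have hFp : ∀ x y, F x y → p y = p x + 1 := fun x y h => windowPos_succ hd h.2.2.1 h.2.2.2.2
  set S : Finset V := {x | 501 ≤ p x} with hS
  obtain ⟨L, l1, l2, l3, l4, l5⟩ := exists_path_cover (F := F) p
    (fun x y h => by rw [hFp x y h]; omega)
    (fun x x' y h h' => σ.injective (h.1.symm.trans h'.1))
    (fun x y y' h h' => h.1.trans h'.1.symm) S
  have hmemL : ∀ x, x ∈ L.flatten ↔ 501 ≤ p x := by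
    intro x
    rw [← List.mem_toFinset, l3, hS]
    simp
  have hLlen : L.length ≤ 3 * b + 1 := by
    have hsub : ({x ∈ S | ∀ y ∈ S, ¬ F x y} : Finset V) ⊆
        ({x | ¬ (G x (σ x) ∧ c (σ x) = c x + d)} : Finset V) ∪
        ({x | p x ∈ ({k - 1} : Finset ℕ)} : Finset V) := by
      intro x hx
      simp only [hS, mem_filter, mem_univ, true_and, mem_union, mem_singleton] at hx ⊢
      by_contra! hcon
      have hlt : p x < k := windowPos_lt x
      have hFx : F x (σ x) := ⟨rfl, hcon.1.1, hcon.1.2, hx.1, by omega⟩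
      have := hFp _ _ hFx
      exact hx.2 (σ x) (by omega) hFx
    have h1 := (card_le_card hsub).trans (card_union_le _ _)
    have h3 : L.length = #{x ∈ S | ∀ y ∈ S, ¬ F x y} := by
      rw [l5]
      congr
    have h2 := hW {k - 1} (by simp; omega) v₀
    rw [card_singleton] at h2
    omega
  have hZ := hW {0} (by simp; omega)
  have hY := hW (Icc 1 500) (by simp; omega)
  rw [card_singleton] at hZ
  simp only [Nat.card_Icc] at hY
  obtain ⟨f, hf, hf'⟩ := exists_isHamCycle_of_paths hG (Y := {x | p x ∈ Icc 1 500})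
    (Z := {x | p x ∈ ({0} : Finset ℕ)}) (fun v => by have := hY v; omega)
    (fun v => by have := hZ v; omega) (by
      rw [disjoint_left]
      intro x
      simp only [mem_filter, mem_univ, true_and, mem_Icc, mem_singleton]
      omega) (by have := hZ v₀; omega) L
    (fun q hq => ⟨(l1 q hq).1.imp fun _ _ h => h.2.1, (l1 q hq).2⟩) l2 (by
      intro x
      simp only [hmemL, mem_filter, mem_univ, true_and, mem_Icc]
      omega) (by
      intro x
      simp only [hmemL, mem_filter, mem_univ, true_and, mem_singleton]
      omega) (by
      have := hZ v₀
      have := hY v₀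
      omega)
  refine ⟨f, hf, fun x h1 h2 h3 h4 => ?_⟩
  have hFx : F x (σ x) := ⟨rfl, h1, h2, h3, h4⟩
  have := hFp _ _ hFx
  obtain ⟨q, hq, hq'⟩ := l4 x (by simpa [hS] using h3) (σ x) (by simp [hS]; omega) hFx
  exact hf' q hq _ _ hq'

end Window

lemma card_window_le {k : ℕ} [Fact k.Prime] {d : ZMod k} (hd : d ≠ 0) (u : ZMod k) (b : ℕ) :
    #{t ∈ range b | ((u - (t : ℕ)) * d⁻¹).val < 501 ∨ k ≤ ((u - (t : ℕ)) * d⁻¹).val + 1} ≤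
      502 * (b / k + 1) := by
  have hc : #(insert (k - 1) (range 501) ×ˢ range (b / k + 1)) ≤ 502 * (b / k + 1) := by
    rw [card_product, card_range]
    gcongr
    exact (card_insert_le _ _).trans (by simp)
  refine (card_le_card_of_injOn (fun t : ℕ => (((u - (t : ZMod k)) * d⁻¹).val, t / k)) ?_
    ?_).trans hc
  · intro t ht
    simp only [coe_filter, Set.mem_ofPred_eq, mem_range] at ht
    have := ZMod.val_lt ((u - (t : ZMod k)) * d⁻¹)
    have := Nat.div_le_div_right (c := k) ht.1.le
    simp only [coe_product, Set.mem_prod, mem_coe, mem_insert, mem_range]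
    omega
  · intro t _ t' _ h
    simp only [Prod.mk.injEq] at h
    have h1 := mul_right_cancel₀ (inv_ne_zero hd) (ZMod.val_injective k h.1)
    have h2 := (ZMod.natCast_eq_natCast_iff' t t' k).1 (sub_right_injective h1)
    rw [← Nat.div_add_mod t k, ← Nat.div_add_mod t' k, h.2, h2]

lemma card_le_of_colour_classes [Fintype V] [Nonempty V] {G : V → V → Prop} (hG : IsTournament G)
    {k : ℕ} [NeZero k] {c : V → ZMod k} {b : ℕ} (hout : ∀ v j, outN G v {x | c x = j} ≤ b)
    (hin : ∀ v j, inN G v {x | c x = j} ≤ b) : Fintype.card V ≤ k * (2 * b + 1) := by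
  obtain ⟨v₀⟩ := ‹Nonempty V›
  rw [← card_univ, card_eq_sum_card_fiberwise (f := c) (t := univ) (fun _ _ => by simp)]
  refine (sum_le_card_nsmul _ _ (2 * b + 1) fun j _ => ?_).trans_eq (by simp [ZMod.card])
  have := card_le_outN_add_inN hG {x | c x = j} v₀
  have := hout v₀ j
  have := hin v₀ j
  omega

/-- For a relation with all rows of size between `a` and `b` covered by `b` permutations, few of
these permutations have many points outside the relation. -/
lemma card_bad_perms_le [Fintype V] {R : V → V → Prop} {a b : ℕ} (hrow : ∀ x, a ≤ #{y | R x y})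
    {σ : ℕ → Equiv.Perm V} (hσ : ∀ x y, R x y → ∃ t < b, σ t x = y) :
    #{t ∈ range b | b < #{x | ¬ R x (σ t x)}} * b ≤ Fintype.card V * (b - a) := by
  calc #{t ∈ range b | b < #{x | ¬ R x (σ t x)}} * b
      ≤ ∑ t ∈ range b with b < #{x | ¬ R x (σ t x)}, #{x | ¬ R x (σ t x)} :=
        card_nsmul_le_sum _ _ _ fun t ht => (mem_filter.1 ht).2.le
    _ ≤ ∑ t ∈ range b, #{x | ¬ R x (σ t x)} :=
        sum_le_sum_of_subset (filter_subset _ _)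
    _ = ∑ x, #{t ∈ range b | ¬ R x (σ t x)} :=
        sum_card_bipartiteAbove_eq_sum_card_bipartiteBelow (fun t x => ¬ R x (σ t x))
    _ ≤ Fintype.card V * (b - a) := by
        rw [← card_univ]
        refine sum_le_card_nsmul _ _ _ fun x _ => ?_
        have h1 : #{y | R x y} ≤ #{t ∈ range b | R x (σ t x)} := by
          refine (card_le_card ?_).trans (card_image_le (f := fun t => σ t x))
          intro y hy
          rw [mem_filter] at hy
          obtain ⟨t, ht, rfl⟩ := hσ x y hy.2
          exact mem_image.2 ⟨t, mem_filter.2 ⟨mem_range.2 ht, hy.2⟩, rfl⟩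
        have h2 := card_filter_add_card_filter_not (s := range b) (fun t => R x (σ t x))
        rw [card_range] at h2
        have := hrow x
        omega

section Colouring

variable [Fintype V] [Nonempty V] {G : V → V → Prop} {k : ℕ} [Fact k.Prime] {c : V → ZMod k}
  {a b : ℕ}

/-- Most of the edges raising the colour by `d` are covered by `b` Hamilton cycles. -/
lemma exists_cover_of_difference (hG : IsTournament G)
    (hout : ∀ v j, a ≤ outN G v {x | c x = j} ∧ outN G v {x | c x = j} ≤ b)
    (hin : ∀ v j, a ≤ inN G v {x | c x = j} ∧ inN G v {x | c x = j} ≤ b)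
    (hk : 501 < k) (ha : 40 ≤ a) (hab : 39 * b ≤ 40 * a)
    (hham : ∃ f : ZMod (Fintype.card V) → V, IsHamCycle G f) {d : ZMod k} (hd : d ≠ 0) :
    ∃ C : Fin b → ZMod (Fintype.card V) → V, (∀ t, IsHamCycle G (C t)) ∧
      (∀ x, #{y | (G x y ∧ c y = c x + d) ∧ ¬ ∃ t s, C t s = x ∧ C t (s + 1) = y} ≤
        3 * k * (b - a) + 502 * (b / k + 1)) ∧
      ∀ y, #{x | (G x y ∧ c y = c x + d) ∧ ¬ ∃ t s, C t s = x ∧ C t (s + 1) = y} ≤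
        3 * k * (b - a) + 502 * (b / k + 1) := by
  obtain ⟨R, hR⟩ : ∃ R : V → V → Prop, ∀ x y, R x y ↔ G x y ∧ c y = c x + d :=
    ⟨_, fun _ _ => Iff.rfl⟩
  have hrow : ∀ x, a ≤ #{y | R x y} ∧ #{y | R x y} ≤ b := by
    intro x
    have h : outN G x {y | c y = c x + d} = #{y | R x y} := by
      unfold outN
      congr 1
      ext y
      simp [hR, and_comm]
    exact h ▸ hout x (c x + d)
  have hcol : ∀ y, #{x | R x y} ≤ b := by
    intro y
    have h : inN G y {x | c x = c y - d} = #{x | R x y} := by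
      unfold inN
      congr 1
      ext x
      simp [hR, and_comm, eq_sub_iff_add_eq, eq_comm]
    exact h ▸ (hin y (c y - d)).2
  obtain ⟨σ, hσ⟩ := exists_perms_cover b R (fun x => (hrow x).2) hcol
  set T : Finset ℕ := {t ∈ range b | b < #{x | ¬ R x (σ t x)}} with hT
  have hTc : #T ≤ 3 * k * (b - a) := by
    have h1 := card_bad_perms_le (fun x => (hrow x).1) hσ
    have h2 := card_le_of_colour_classes hG (fun v j => (hout v j).2) (fun v j => (hin v j).2)
    have hb : 0 < b := by
      have := hrow (Classical.arbitrary V)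
      omega
    have h3 : k * (2 * b + 1) ≤ 3 * k * b := by nlinarith
    refine Nat.le_of_mul_le_mul_right ?_ hb
    calc #T * b ≤ Fintype.card V * (b - a) := h1
      _ ≤ 3 * k * b * (b - a) := Nat.mul_le_mul_right _ (h2.trans h3)
      _ = 3 * k * (b - a) * b := by ring
  have hcyc : ∀ t : Fin b, ∃ f : ZMod (Fintype.card V) → V, IsHamCycle G f ∧
      ((t : ℕ) ∉ T → ∀ x, R x (σ t x) → 501 ≤ windowPos c d (t : ℕ) x →
        windowPos c d (t : ℕ) x + 1 < k → ∃ s, f s = x ∧ f (s + 1) = σ t x) := by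
    intro t
    by_cases ht : (t : ℕ) ∈ T
    · obtain ⟨f, hf⟩ := hham
      exact ⟨f, hf, fun h => absurd ht h⟩
    · obtain ⟨f, hf, hf'⟩ := exists_isHamCycle_of_window hG hout hin hk ha hab hd ((t : ℕ) : ZMod k)
        (σ t) (by
          by_contra hcon
          refine ht (mem_filter.2 ⟨mem_range.2 t.2, ?_⟩)
          simpa only [hR, not_le] using hcon)
      exact ⟨f, hf, fun _ x hx => hf' x ((hR _ _).1 hx).1 ((hR _ _).1 hx).2⟩
  choose C hC hC' using hcyc
  have hunc : ∀ x y, ((G x y ∧ c y = c x + d) ∧ ¬ ∃ t s, C t s = x ∧ C t (s + 1) = y) →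
      ∃ t ∈ T ∪ {t ∈ range b | ((c x - (t : ℕ)) * d⁻¹).val < 501 ∨
        k ≤ ((c x - (t : ℕ)) * d⁻¹).val + 1}, σ t x = y := by
    rintro x y ⟨hxy, hn⟩
    obtain ⟨t, ht, rfl⟩ := hσ x y ((hR _ _).2 hxy)
    refine ⟨t, ?_, rfl⟩
    by_contra hcon
    simp only [mem_union, mem_filter, mem_range, ht, true_and, not_or, not_lt, not_le] at hcon
    exact hn ⟨⟨t, ht⟩, hC' ⟨t, ht⟩ hcon.1 x ((hR _ _).2 hxy) hcon.2.1 hcon.2.2⟩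
  refine ⟨C, hC, fun x => ?_, fun y => ?_⟩
  · refine le_trans ?_ (Nat.add_le_add hTc (card_window_le hd (c x) b))
    refine le_trans ?_ (card_union_le _ _)
    refine (card_le_card ?_).trans (card_image_le (f := fun t => σ t x))
    intro y hy
    obtain ⟨t, ht, rfl⟩ := hunc x y (mem_filter.1 hy).2
    exact mem_image.2 ⟨t, ht, rfl⟩
  · refine le_trans ?_ (Nat.add_le_add hTc (card_window_le hd (c y - d) b))
    refine le_trans ?_ (card_union_le _ _)
    refine (card_le_card ?_).trans (card_image_le (f := fun t => (σ t).symm y))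
    intro x hx
    have hx := (mem_filter.1 hx).2
    obtain ⟨t, ht, rfl⟩ := hunc x y hx
    rw [eq_sub_iff_add_eq.2 hx.1.2.symm] at ht
    exact mem_image.2 ⟨t, ht, (σ t).symm_apply_apply x⟩

/-- Most of the edges are covered by `k * b` Hamilton cycles. -/
lemma exists_almost_cover (hG : IsTournament G)
    (hout : ∀ v j, a ≤ outN G v {x | c x = j} ∧ outN G v {x | c x = j} ≤ b)
    (hin : ∀ v j, a ≤ inN G v {x | c x = j} ∧ inN G v {x | c x = j} ≤ b)
    (hk : 501 < k) (ha : 40 ≤ a) (hab : 39 * b ≤ 40 * a)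
    (hham : ∃ f : ZMod (Fintype.card V) → V, IsHamCycle G f) :
    ∃ C : ZMod k × Fin b → ZMod (Fintype.card V) → V, (∀ t, IsHamCycle G (C t)) ∧
      (∀ x, #{y | G x y ∧ ¬ ∃ t s, C t s = x ∧ C t (s + 1) = y} ≤
        b + k * (3 * k * (b - a) + 502 * (b / k + 1))) ∧
      ∀ y, #{x | G x y ∧ ¬ ∃ t s, C t s = x ∧ C t (s + 1) = y} ≤
        b + k * (3 * k * (b - a) + 502 * (b / k + 1)) := by
  set q := 3 * k * (b - a) + 502 * (b / k + 1) with hq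
  have hdiff : ∀ d : ZMod k, ∃ C : Fin b → ZMod (Fintype.card V) → V, (∀ t, IsHamCycle G (C t)) ∧
      (d ≠ 0 →
        (∀ x, #{y | (G x y ∧ c y = c x + d) ∧ ¬ ∃ t s, C t s = x ∧ C t (s + 1) = y} ≤ q) ∧
        ∀ y, #{x | (G x y ∧ c y = c x + d) ∧ ¬ ∃ t s, C t s = x ∧ C t (s + 1) = y} ≤ q) := by
    intro d
    by_cases hd : d = 0
    · obtain ⟨f, hf⟩ := hham
      exact ⟨fun _ => f, fun _ => hf, fun h => absurd hd h⟩
    · obtain ⟨C, h1, h2⟩ := exists_cover_of_difference hG hout hin hk ha hab hham hd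
      exact ⟨C, h1, fun _ => h2⟩
  choose C hC hC' using hdiff
  refine ⟨fun t => C t.1 t.2, fun t => hC _ _, fun x => ?_, fun y => ?_⟩
  · have hsub : ({y | G x y ∧ ¬ ∃ t : ZMod k × Fin b, ∃ s, C t.1 t.2 s = x ∧
        C t.1 t.2 (s + 1) = y} : Finset V) ⊆
        ({y ∈ ({y | c y = c x} : Finset V) | G x y} : Finset V) ∪
        ({d | d ≠ 0} : Finset (ZMod k)).biUnion fun d =>
          {y | (G x y ∧ c y = c x + d) ∧ ¬ ∃ t s, C d t s = x ∧ C d t (s + 1) = y} := by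
      intro y hy
      simp only [mem_union, mem_biUnion, mem_filter, mem_univ, true_and] at hy ⊢
      by_cases h0 : c y = c x
      · exact Or.inl ⟨h0, hy.1⟩
      · refine Or.inr ⟨c y - c x, sub_ne_zero.2 h0, ⟨hy.1, by ring⟩, ?_⟩
        rintro ⟨t, s, hs⟩
        exact hy.2 ⟨(_, t), s, hs⟩
    refine ((card_le_card hsub).trans (card_union_le _ _)).trans
      (Nat.add_le_add (hout x (c x)).2 ?_)
    refine (card_biUnion_le_card_mul _ _ q fun d hd => (hC' d (mem_filter.1 hd).2).1 x).trans ?_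
    exact Nat.mul_le_mul_right _ ((card_le_univ _).trans_eq (ZMod.card k))
  · have hsub : ({x | G x y ∧ ¬ ∃ t : ZMod k × Fin b, ∃ s, C t.1 t.2 s = x ∧
        C t.1 t.2 (s + 1) = y} : Finset V) ⊆
        ({x ∈ ({x | c x = c y} : Finset V) | G x y} : Finset V) ∪
        ({d | d ≠ 0} : Finset (ZMod k)).biUnion fun d =>
          {x | (G x y ∧ c y = c x + d) ∧ ¬ ∃ t s, C d t s = x ∧ C d t (s + 1) = y} := by
      intro x hx
      simp only [mem_union, mem_biUnion, mem_filter, mem_univ, true_and] at hx ⊢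
      by_cases h0 : c y = c x
      · exact Or.inl ⟨h0.symm, hx.1⟩
      · refine Or.inr ⟨c y - c x, sub_ne_zero.2 h0, ⟨hx.1, by ring⟩, ?_⟩
        rintro ⟨t, s, hs⟩
        exact hx.2 ⟨(_, t), s, hs⟩
    refine ((card_le_card hsub).trans (card_union_le _ _)).trans
      (Nat.add_le_add (hin y (c y)).2 ?_)
    refine (card_biUnion_le_card_mul _ _ q fun d hd => (hC' d (mem_filter.1 hd).2).2 y).trans ?_
    exact Nat.mul_le_mul_right _ ((card_le_univ _).trans_eq (ZMod.card k))

end Colouring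

lemma exists_balanced_classes [Fintype V] {G : V → V → Prop}
    (hreg : ∀ v, 2 * outN G v univ + 1 = Fintype.card V ∧ 2 * inN G v univ + 1 = Fintype.card V)
    {k : ℕ} [NeZero k] {ε : ℝ} (hε : 0 < ε) (hε1 : ε ≤ 1) (hk : 128 * k < ε ^ 4 * Fintype.card V)
    (hn : 1 ≤ ε * Fintype.card V) :
    ∃ c : V → ZMod k, ∀ v j,
      |(outN G v {x | c x = j} : ℝ) - Fintype.card V / (2 * k)| ≤ 2 * ε * Fintype.card V ∧
      |(inN G v {x | c x = j} : ℝ) - Fintype.card V / (2 * k)| ≤ 2 * ε * Fintype.card V := by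
  set n : ℝ := (Fintype.card V : ℝ) with hn'
  have hk1 : (1 : ℝ) ≤ k := by exact_mod_cast NeZero.one_le
  have hnpos : 0 < n := pos_of_mul_pos_right (by linarith) hε.le
  have hexp : 2 * (Fintype.card (V ⊕ V) : ℝ) * k < Real.exp (ε ^ 2 / 4 * n) := by
    have h1 : 0 ≤ ε ^ 2 / 4 * n := by positivity
    refine lt_of_lt_of_le ?_ (Real.quadratic_le_exp_of_nonneg h1)
    rw [Fintype.card_sum]
    push_cast
    have h2 : 128 * k * n < ε ^ 4 * n * n := mul_lt_mul_of_pos_right hk hnpos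
    nlinarith
  obtain ⟨c, hc⟩ := exists_balanced_coloring
    (Sum.elim (fun v => ({y | G v y} : Finset V)) (fun v => ({y | G y v} : Finset V))) hε hε1 hexp
  have key : ∀ s t : ℕ, 2 * s + 1 = Fintype.card V → |(t : ℝ) - s / k| ≤ ε * n →
      |(t : ℝ) - n / (2 * k)| ≤ 2 * ε * n := by
    intro s t hs ht
    have hs' : (2 : ℝ) * s + 1 = n := by rw [hn']; exact_mod_cast hs
    have h1 : n / (2 * k) = s / k + 1 / (2 * k) := by
      rw [← hs']
      field_simp
    have h2 : (1 : ℝ) / (2 * k) ≤ 1 := by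
      rw [div_le_one (by positivity)]
      linarith
    have h3 : (0 : ℝ) ≤ 1 / (2 * k) := by positivity
    rw [h1]
    rw [abs_le] at ht ⊢
    constructor <;> linarith
  have hfil : ∀ (P : V → Prop) j, #{y ∈ ({x | P x} : Finset V) | c y = j} =
      #{y ∈ ({x | c x = j} : Finset V) | P y} := by
    intro P j
    rw [filter_comm]
  refine ⟨c, fun v j => ⟨key _ _ (hreg v).1 ?_, key _ _ (hreg v).2 ?_⟩⟩
  · have := hc (Sum.inl v) j
    simp only [Sum.elim_inl, hfil] at this
    exact this
  · have := hc (Sum.inr v) j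
    simp only [Sum.elim_inr, hfil] at this
    exact this

/-- A large regular tournament has a small set of vertices that splits evenly all in- and
outneighbourhoods. -/
lemma exists_balanced_set [Fintype V] {G : V → V → Prop}
    (hreg : ∀ v, 2 * outN G v univ + 1 = Fintype.card V ∧ 2 * inN G v univ + 1 = Fintype.card V)
    (hn : 10 ^ 30 ≤ Fintype.card V) :
    ∃ Z : Finset V, (∀ v, 998 * Fintype.card V ≤ 1000000 * outN G v Z ∧
        1000000 * outN G v Z ≤ 1002 * Fintype.card V) ∧
      ∀ v, 998 * Fintype.card V ≤ 1000000 * inN G v Z ∧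
        1000000 * inN G v Z ≤ 1002 * Fintype.card V := by
  have hn' : (10 : ℝ) ^ 30 ≤ Fintype.card V := by exact_mod_cast hn
  obtain ⟨c, hc⟩ := exists_balanced_classes hreg (k := 500) (ε := 1 / 10 ^ 6) (by norm_num)
    (by norm_num) (by norm_num; linarith) (by norm_num; linarith)
  have key : ∀ t : ℕ, |(t : ℝ) - Fintype.card V / (2 * (500 : ℕ))| ≤
      2 * (1 / 10 ^ 6) * Fintype.card V →
      998 * Fintype.card V ≤ 1000000 * t ∧ 1000000 * t ≤ 1002 * Fintype.card V := by
    intro t ht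
    rw [abs_le] at ht
    push_cast at ht
    have h1 : (998 : ℝ) * Fintype.card V ≤ 1000000 * t := by linarith
    have h2 : (1000000 : ℝ) * t ≤ 1002 * Fintype.card V := by linarith
    exact ⟨by exact_mod_cast h1, by exact_mod_cast h2⟩
  exact ⟨({x | c x = 0} : Finset V), fun v => key _ (hc v 0).1, fun v => key _ (hc v 0).2⟩

/-- A large regular tournament on `n` vertices can be covered by `n / 2 + O(n / k)` Hamilton
cycles. -/
lemma exists_cover_of_prime [Fintype V] {G : V → V → Prop} (hG : IsTournament G)
    (hreg : ∀ v, 2 * outN G v univ + 1 = Fintype.card V ∧ 2 * inN G v univ + 1 = Fintype.card V)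
    {k : ℕ} (hkp : k.Prime) (hk : 501 < k)
    (hn : 10 ^ 30 * k ^ 13 ≤ Fintype.card V) :
    ∃ (m : ℕ) (C : Fin m → ZMod (Fintype.card V) → V),
      (m : ℝ) ≤ Fintype.card V / 2 + 2 * 10 ^ 9 * (Fintype.card V / k) ∧
      (∀ j, IsHamCycle G (C j)) ∧ ∀ x y, G x y → ∃ j i, C j i = x ∧ C j (i + 1) = y := by
  have : Fact k.Prime := ⟨hkp⟩
  have hk13 : 1 ≤ k ^ 13 := Nat.one_le_pow _ _ (by omega)
  have hn30 : 10 ^ 30 ≤ Fintype.card V := by omega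
  have : Nonempty V := Fintype.card_pos_iff.1 (by omega)
  obtain ⟨Z, hZo, hZi⟩ := exists_balanced_set hreg hn30
  have hn6 : 1000000 ≤ Fintype.card V := by omega
  have hham : ∃ f : ZMod (Fintype.card V) → V, IsHamCycle G f := by
    obtain ⟨f, hf, -⟩ := exists_isHamCycle_of_matching hG hreg hn6 hZo hZi ∅ (by simp) (by simp)
      (by simp)
    exact ⟨f, hf⟩
  set n : ℝ := (Fintype.card V : ℝ) with hn'
  have hnR : (10 : ℝ) ^ 30 * k ^ 13 ≤ n := by rw [hn']; exact_mod_cast hn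
  have hkR : (502 : ℝ) ≤ k := by exact_mod_cast hk
  have hk0 : (0 : ℝ) < k := by linarith
  -- `w` is the average number of outneighbours in two classes
  set w : ℝ := n / k with hw
  have hnw : n = k * w := by rw [hw]; field_simp
  have hwk : 10 ^ 30 * (k : ℝ) ^ 12 ≤ w := by
    rw [hw, le_div_iff₀ hk0]
    linarith [pow_succ (k : ℝ) 12]
  have hw0 : 0 < w := lt_of_lt_of_le (by positivity) hwk
  have hwk1 : 10 ^ 30 * (k : ℝ) ≤ w := by
    have : (k : ℝ) ^ 1 ≤ k ^ 12 := pow_le_pow_right₀ (by linarith) (by norm_num)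
    linarith
  set ε : ℝ := 1 / (400 * k ^ 3) with hε
  have hεn : ε * n = w / (400 * k ^ 2) := by
    rw [hnw, hε]
    field_simp
  have hk2 : (1 : ℝ) ≤ k ^ 2 := one_le_pow₀ (by linarith)
  have hεw : k ^ 2 * (ε * n) = w / 400 := by
    rw [hεn]
    field_simp
  have hεn0 : 0 ≤ ε * n := by rw [hεn]; positivity
  have hεn1 : ε * n ≤ w / 400 := by nlinarith
  have hεn2 : k * (ε * n) ≤ w / 400 := by nlinarith
  obtain ⟨c, hc⟩ := exists_balanced_classes hreg (k := k) (ε := ε) (by positivity)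
    (by
      rw [hε, div_le_one (by positivity)]
      have : (1 : ℝ) ≤ k ^ 3 := one_le_pow₀ (by linarith)
      linarith)
    (by
      rw [← hn', hε, div_pow, one_pow, one_div_mul_eq_div, lt_div_iff₀ (by positivity)]
      refine lt_of_lt_of_le ?_ hnR
      have : (0 : ℝ) < k ^ 13 := by positivity
      calc (128 : ℝ) * k * (400 * (k : ℝ) ^ 3) ^ 4 = 128 * 400 ^ 4 * (k : ℝ) ^ 13 := by ring
        _ < 10 ^ 30 * (k : ℝ) ^ 13 := mul_lt_mul_of_pos_right (by norm_num) this)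
    (by
      rw [← hn', hεn, le_div_iff₀ (by positivity)]
      have : (k : ℝ) ^ 2 ≤ k ^ 12 := pow_le_pow_right₀ (by linarith) (by norm_num)
      linarith)
  set δ : ℝ := ε * n with hδ
  have hhalf : n / (2 * k) = w / 2 := by rw [hw]; field_simp
  set a := ⌈w / 2 - 2 * δ⌉₊ with ha
  set b := ⌊w / 2 + 2 * δ⌋₊ with hb
  have hbr : (b : ℝ) ≤ w / 2 + 2 * δ := Nat.floor_le (by positivity)
  have har : w / 2 - 2 * δ ≤ a := Nat.le_ceil _
  have key : ∀ t : ℕ, |(t : ℝ) - n / (2 * k)| ≤ 2 * ε * n → a ≤ t ∧ t ≤ b := by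
    intro t ht
    rw [hhalf, mul_assoc, ← hδ, abs_le] at ht
    exact ⟨Nat.ceil_le.2 (by linarith), Nat.le_floor (by linarith)⟩
  have ha40 : 40 ≤ a := by
    have : (40 : ℝ) ≤ a := by linarith
    exact_mod_cast this
  have hab : 39 * b ≤ 40 * a := by
    have : (39 : ℝ) * b ≤ 40 * a := by linarith
    exact_mod_cast this
  obtain ⟨C₁, hC₁, ho, hi⟩ := exists_almost_cover hG (fun v j => key _ (hc v j).1)
    (fun v j => key _ (hc v j).2) hk ha40 hab hham
  set D := b + k * (3 * k * (b - a) + 502 * (b / k + 1)) with hD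
  obtain ⟨C₂, hC₂, hC₂'⟩ := exists_cover_of_sparse hG hreg hn6 hZo hZi
    (H := fun x y => G x y ∧ ¬ ∃ t s, C₁ t s = x ∧ C₁ t (s + 1) = y) (D := D)
    (fun x y h => h.1) (fun x => by convert ho x) (fun y => by convert hi y)
  have hDr : (D : ℝ) ≤ 300 * w := by
    have h1 : ((b - a : ℕ) : ℝ) ≤ 4 * δ := by
      rcases le_total a b with h | h
      · rw [Nat.cast_sub h]
        linarith
      · rw [Nat.sub_eq_zero_of_le h]
        simpa using hεn0
    have h2 : (k : ℝ) * ((b / k : ℕ) : ℝ) ≤ b := by exact_mod_cast Nat.mul_div_le b k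
    have h3 : (k : ℝ) ^ 2 * ((b - a : ℕ) : ℝ) ≤ k ^ 2 * (4 * δ) := by gcongr
    have h4 : (D : ℝ) = b + 3 * (k ^ 2 * ((b - a : ℕ) : ℝ)) +
        502 * (k * ((b / k : ℕ) : ℝ)) + 502 * k := by
      rw [hD]
      push_cast
      ring
    linarith
  set ι := (ZMod k × Fin b) ⊕ Fin (2000004 * D + 1)
  have hcard : Fintype.card ι = k * b + (2000004 * D + 1) := by
    simp [ι, ZMod.card]
  let e := Fintype.equivFin ι
  refine ⟨Fintype.card ι, fun j => Sum.elim C₁ C₂ (e.symm j), ?_, fun j => ?_, fun x y hxy => ?_⟩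
  · have h1 : (k : ℝ) * b ≤ k * (w / 2 + 2 * δ) := by gcongr
    rw [hcard]
    push_cast
    linarith
  · change IsHamCycle G (Sum.elim C₁ C₂ (e.symm j))
    rcases e.symm j with t | t
    · exact hC₁ t
    · exact hC₂ t
  · by_cases h : ∃ t s, C₁ t s = x ∧ C₁ t (s + 1) = y
    · obtain ⟨t, s, hs⟩ := h
      exact ⟨e (Sum.inl t), s, by simpa using hs⟩
    · obtain ⟨t, s, hs⟩ := hC₂' x y ⟨hxy, h⟩
      exact ⟨e (Sum.inr t), s, by simpa using hs⟩

lemma two_mul_outN_univ_add_one [Fintype V] {G : V → V → Prop} (hG : IsTournament G)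
    (h : ∀ x : V, outDeg G x = (Fintype.card V - 1) / 2 ∧
      inDeg G x = (Fintype.card V - 1) / 2) (v : V) :
    2 * outN G v univ + 1 = Fintype.card V ∧ 2 * inN G v univ + 1 = Fintype.card V := by
  have h1 : outN G v univ = outDeg G v := by
    unfold outN outDeg
    rw [Nat.card_eq_fintype_card, Fintype.card_subtype]
  have h2 : inN G v univ = inDeg G v := by
    unfold inN inDeg
    rw [Nat.card_eq_fintype_card, Fintype.card_subtype]
  have h3 := outN_add_inN hG univ v
  rw [card_erase_of_mem (mem_univ v), card_univ] at h3
  have h4 : 0 < Fintype.card V := Fintype.card_pos_iff.2 ⟨v⟩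
  have := h v
  omega

end HamiltonCover

/-- For every ξ > 0 there exists n₀ such that every regular tournament on n ≥ n₀ vertices
contains a set of at most (1/2 + ξ)n Hamilton cycles which together cover all its edges. -/
theorem regular_tournament_hamilton_cover (ξ : ℝ) (hξ : 0 < ξ) :
    ∃ n₀ : ℕ, ∀ (V : Type) [Fintype V] (G : V → V → Prop),
      n₀ ≤ Fintype.card V →
      IsTournament G →
      (∀ x : V, outDeg G x = (Fintype.card V - 1) / 2 ∧
        inDeg G x = (Fintype.card V - 1) / 2) →
      ∃ (m : ℕ) (C : Fin m → ZMod (Fintype.card V) → V),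
        (m : ℝ) ≤ (1 / 2 + ξ) * (Fintype.card V : ℝ) ∧
        (∀ j, IsHamCycle G (C j)) ∧
        ∀ x y : V, G x y → ∃ (j : Fin m) (i : ZMod (Fintype.card V)),
          C j i = x ∧ C j (i + 1) = y := by
  obtain ⟨k, hk, hkp⟩ := Nat.exists_infinite_primes (502 + ⌈2 * 10 ^ 9 / ξ⌉₊)
  refine ⟨10 ^ 30 * k ^ 13, fun V _ G hn hG hdeg => ?_⟩
  obtain ⟨m, C, hm, hC⟩ := exists_cover_of_prime hG (two_mul_outN_univ_add_one hG hdeg) hkp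
    (by omega) hn
  refine ⟨m, C, hm.trans ?_, hC⟩
  have hk0 : (0 : ℝ) < k := Nat.cast_pos.2 hkp.pos
  have h1 : 2 * 10 ^ 9 / ξ ≤ k :=
    (Nat.le_ceil _).trans (Nat.cast_le.2 ((Nat.le_add_left _ _).trans hk))
  rw [div_le_iff₀ hξ] at h1
  have h2 : 2 * 10 ^ 9 * ((Fintype.card V : ℝ) / k) ≤ ξ * Fintype.card V := by
    rw [← mul_div_assoc, div_le_iff₀ hk0]
    nlinarith [Nat.cast_nonneg (α := ℝ) (Fintype.card V)]
  linarith
end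

section
/- For every ξ > 0 there is an integer n₀ = n₀(ξ) such that every d-regular (undirected) graph G on n ≥ n₀ vertices with d ≥ (1/2 + ξ)n contains a set of at most (d + ξn)/2 Hamilton cycles which together cover all the edges of G. -/
namespace HamiltonCover

section

variable {V : Type*}

/-- The edges joining consecutive entries of a list. -/
def pathEdges : List V → Multiset (Sym2 V)
  | [] => 0
  | [_] => 0
  | a :: b :: l => s(a, b) ::ₘ pathEdges (b :: l)

/-- The edges joining cyclically consecutive entries of a list. -/
def cycleEdges (l : List V) : Multiset (Sym2 V) :=
  pathEdges l + if h : l ≠ [] then {s(l.getLast h, l.head h)} else 0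

lemma cycleEdges_of_ne_nil {l : List V} (h : l ≠ []) :
    cycleEdges l = s(l.getLast h, l.head h) ::ₘ pathEdges l := by
  rw [cycleEdges, dif_pos h, add_comm, Multiset.singleton_add]

lemma pathEdges_append {l₁ l₂ : List V} (h₁ : l₁ ≠ []) (h₂ : l₂ ≠ []) :
    pathEdges (l₁ ++ l₂) =
      s(l₁.getLast h₁, l₂.head h₂) ::ₘ (pathEdges l₁ + pathEdges l₂) := by
  induction l₁ with
  | nil => exact absurd rfl h₁
  | cons a l ih =>
    cases l with
    | nil =>
      cases l₂ with
      | nil => exact absurd rfl h₂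
      | cons b l₂ => simp [pathEdges]
    | cons b l =>
      have := ih (by simp)
      simp only [List.cons_append] at this
      simp only [List.cons_append, pathEdges, this, Multiset.cons_add]
      rw [Multiset.cons_swap]
      simp

lemma pathEdges_reverse (l : List V) : pathEdges l.reverse = pathEdges l := by
  induction l with
  | nil => rfl
  | cons a l ih =>
    cases l with
    | nil => rfl
    | cons b l =>
      rw [List.reverse_cons, pathEdges_append (by simp) (by simp), ih]
      simp [pathEdges, Sym2.eq_swap]

lemma card_pathEdges_add_one {l : List V} (h : l ≠ []) :
    (pathEdges l).card + 1 = l.length := by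
  induction l with
  | nil => exact absurd rfl h
  | cons a l ih =>
    cases l with
    | nil => rfl
    | cons b l => simpa [pathEdges] using ih (by simp)

lemma card_cycleEdges (l : List V) : (cycleEdges l).card = l.length := by
  by_cases h : l = []
  · subst h; rfl
  · rw [cycleEdges_of_ne_nil h, Multiset.card_cons, card_pathEdges_add_one h]

lemma cycleEdges_append_comm {l₁ l₂ : List V} (h₁ : l₁ ≠ []) (h₂ : l₂ ≠ []) :
    cycleEdges (l₁ ++ l₂) = cycleEdges (l₂ ++ l₁) := by
  rw [cycleEdges_of_ne_nil (by simp [h₁]), cycleEdges_of_ne_nil (by simp [h₁]),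
    pathEdges_append h₁ h₂, pathEdges_append h₂ h₁, Multiset.cons_swap, add_comm]
  simp [List.head_append_of_ne_nil, List.getLast_append_of_ne_nil, h₁, h₂]

lemma exists_append_of_mem_pathEdges {l : List V} {e : Sym2 V} (he : e ∈ pathEdges l) :
    ∃ (l₁ l₂ : List V) (h₁ : l₁ ≠ []) (h₂ : l₂ ≠ []),
      l = l₁ ++ l₂ ∧ e = s(l₁.getLast h₁, l₂.head h₂) := by
  induction l with
  | nil => simp [pathEdges] at he
  | cons a l ih =>
    cases l with
    | nil => simp [pathEdges] at he
    | cons b l =>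
      rcases Multiset.mem_cons.1 he with rfl | he
      · exact ⟨[a], b :: l, by simp, by simp, rfl, rfl⟩
      · obtain ⟨l₁, l₂, h₁, h₂, h, rfl⟩ := ih he
        exact ⟨a :: l₁, l₂, by simp, h₂, by simp [h], by simp [List.getLast_cons h₁]⟩

/-- Any edge of a cyclic list can be made its closing edge by a rotation. -/
lemma exists_perm_closing {l : List V} {e : Sym2 V} (he : e ∈ cycleEdges l) :
    ∃ (l' : List V) (h : l' ≠ []), l'.Perm l ∧ cycleEdges l' = cycleEdges l ∧
      e = s(l'.getLast h, l'.head h) := by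
  have hl : l ≠ [] := by rintro rfl; simp [cycleEdges, pathEdges] at he
  rw [cycleEdges_of_ne_nil hl, Multiset.mem_cons] at he
  rcases he with rfl | he
  · exact ⟨l, hl, .refl _, rfl, rfl⟩
  · obtain ⟨l₁, l₂, h₁, h₂, rfl, rfl⟩ := exists_append_of_mem_pathEdges he
    refine ⟨l₂ ++ l₁, by simp [h₁], List.perm_append_comm, cycleEdges_append_comm h₂ h₁, ?_⟩
    simp [List.head_append_of_ne_nil, List.getLast_append_of_ne_nil, h₁, h₂]

/-- The effect of reversing a segment of a cyclic list on its edges. -/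
lemma cycleEdges_reverse_segment {l₁ l₂ : List V} (h₁ : l₁ ≠ []) (h₂ : l₂ ≠ []) :
    ∃ R : Multiset (Sym2 V),
      cycleEdges (l₁ ++ l₂) =
        s(l₂.getLast h₂, l₁.head h₁) ::ₘ s(l₁.getLast h₁, l₂.head h₂) ::ₘ R ∧
      cycleEdges (l₁ ++ l₂.reverse) =
        s(l₂.getLast h₂, l₁.getLast h₁) ::ₘ s(l₁.head h₁, l₂.head h₂) ::ₘ R := by
  refine ⟨pathEdges l₁ + pathEdges l₂, ?_, ?_⟩
  · rw [cycleEdges_of_ne_nil (by simp [h₁]), pathEdges_append h₁ h₂]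
    simp [List.head_append_of_ne_nil, List.getLast_append_of_ne_nil, h₁, h₂]
  · rw [cycleEdges_of_ne_nil (by simp [h₁]), pathEdges_append h₁ (by simpa using h₂),
      pathEdges_reverse, Multiset.cons_swap]
    have h₂' : l₂.reverse ≠ [] := by simpa using h₂
    rw [Sym2.eq_swap, List.getLast_append_of_ne_nil _ h₂']
    simp [List.head_append_of_ne_nil, h₁, Sym2.eq_swap]

lemma exists_consecutive (p q : V → Bool) (a : V) (l : List V)
    (h : l.length + 1 < (a :: l).countP p + l.countP q) :
    ∃ l₁ l₂ v w, a :: l = (l₁ ++ [v]) ++ w :: l₂ ∧ p v ∧ q w := by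
  induction l generalizing a with
  | nil =>
    have := List.countP_le_length (p := p) (l := [a])
    simp at h this; omega
  | cons b l ih =>
    by_cases hab : p a ∧ q b
    · exact ⟨[], l, a, b, rfl, hab⟩
    · obtain ⟨l₁, l₂, v, w, h', hv⟩ := ih b (by
        rw [List.countP_cons (a := a), List.countP_cons (a := b) (p := q)] at h
        have : (if p a then 1 else 0) + (if q b then 1 else 0) ≤ 1 := by
          split_ifs <;> simp_all
        simp only [List.length_cons] at h
        omega)
      exact ⟨a :: l₁, l₂, v, w, by simp [h'], hv⟩

end

section

variable {V : Type*}

lemma mem_pathEdges_append_cons_cons (l₁ l₂ : List V) (a b : V) :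
    s(a, b) ∈ pathEdges (l₁ ++ a :: b :: l₂) := by
  by_cases h : l₁ = []
  · subst h; simp [pathEdges]
  · rw [pathEdges_append h (by simp)]
    simp [pathEdges]

/-- Arcs of an injective partial function along which `h` increases can all be placed
consecutively in one list. -/
lemma exists_list_of_linear_forest [DecidableEq V] {α : Type*} [LinearOrder α]
    (R : V → V → Prop) (h : V → α) (hR : ∀ u v, R u v → h u < h v)
    (hout : ∀ u v w, R u v → R u w → v = w) (hin : ∀ u v w, R u w → R v w → u = v)
    (S : Finset V) :
    ∃ l : List V, l.Nodup ∧ (∀ v, v ∈ l ↔ v ∈ S) ∧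
      ∀ u ∈ S, ∀ v ∈ S, R u v → ∃ l₁ l₂, l = l₁ ++ u :: v :: l₂ := by
  induction S using Finset.induction_on_max_value h with
  | empty => exact ⟨[], by simp⟩
  | insert w S hw hmax ih =>
    obtain ⟨l, hnd, hmem, hl⟩ := ih
    have hw' : ∀ v ∈ insert w S, ¬ R w v := by
      intro v hv hwv
      have h₁ := hR _ _ hwv
      rcases Finset.mem_insert.1 hv with rfl | hv
      · exact lt_irrefl _ h₁
      · exact absurd (hmax v hv) (not_le.2 h₁)
    by_cases hu : ∃ u ∈ S, R u w
    · obtain ⟨u, huS, hu⟩ := hu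
      obtain ⟨A, B, rfl⟩ := List.append_of_mem ((hmem u).2 huS)
      have hp : (A ++ u :: w :: B).Perm (w :: (A ++ u :: B)) := by
        have := List.perm_middle (a := w) (l₁ := A ++ [u]) (l₂ := B)
        simpa using this
      refine ⟨A ++ u :: w :: B, hp.nodup_iff.2 (List.nodup_cons.2 ⟨by rwa [hmem], hnd⟩), ?_, ?_⟩
      · intro v
        rw [hp.mem_iff, List.mem_cons, hmem, Finset.mem_insert]
      · intro a ha b hb hab
        have haS : a ∈ S := by
          rcases Finset.mem_insert.1 ha with rfl | ha
          · exact absurd hab (hw' b hb)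
          · exact ha
        rcases Finset.mem_insert.1 hb with rfl | hbS
        · exact ⟨A, B, by rw [hin _ _ _ hab hu]⟩
        · have hau : a ≠ u := by
            rintro rfl
            exact hw (hout _ _ _ hab hu ▸ hbS)
          obtain ⟨C, D, hCD⟩ := hl a haS b hbS hab
          rcases List.append_eq_append_iff.1 hCD with ⟨E, rfl, hE⟩ | ⟨E, rfl, hE⟩
          · cases E with
            | nil => simp at hE; exact absurd hE.1.symm hau
            | cons c E =>
              simp only [List.cons_append, List.cons.injEq] at hE
              obtain ⟨rfl, rfl⟩ := hE
              exact ⟨A ++ u :: w :: E, D, by simp⟩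
          · match E, hE with
            | [], hE => simp at hE; exact absurd hE.1 hau
            | [c], hE =>
              simp only [List.cons_append, List.nil_append, List.cons.injEq] at hE
              obtain ⟨rfl, rfl, rfl⟩ := hE
              exact ⟨C, w :: D, by simp⟩
            | c :: e :: E, hE =>
              simp only [List.cons_append, List.cons.injEq] at hE
              obtain ⟨rfl, rfl, rfl⟩ := hE
              exact ⟨C, E ++ u :: w :: B, by simp⟩
    · refine ⟨w :: l, List.nodup_cons.2 ⟨by rwa [hmem], hnd⟩, by simp [hmem], ?_⟩
      intro a ha b hb hab
      have haS : a ∈ S := by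
        rcases Finset.mem_insert.1 ha with rfl | ha
        · exact absurd hab (hw' b hb)
        · exact ha
      rcases Finset.mem_insert.1 hb with rfl | hbS
      · exact absurd ⟨a, haS, hab⟩ hu
      · obtain ⟨C, D, rfl⟩ := hl a haS b hbS hab
        exact ⟨w :: C, D, rfl⟩

/-- A list enumerating all vertices exactly once. -/
def IsEnumeration (l : List V) : Prop := l.Nodup ∧ ∀ v, v ∈ l

lemma IsEnumeration.perm {l l' : List V} (hl : IsEnumeration l) (h : l'.Perm l) :
    IsEnumeration l' :=
  ⟨h.nodup_iff.2 hl.1, fun v => h.mem_iff.2 (hl.2 v)⟩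

lemma IsEnumeration.countP [Fintype V] [DecidableEq V] {l : List V} (hl : IsEnumeration l)
    (p : V → Prop) [DecidablePred p] :
    l.countP p = (Finset.univ.filter p).card := by
  have : (Finset.univ.filter p) = (l.filter p).toFinset := by
    ext v; simp [hl.2 v]
  rw [this, List.toFinset_card_of_nodup (hl.1.filter _), List.countP_eq_length_filter]

lemma IsEnumeration.length [Fintype V] [DecidableEq V] {l : List V} (hl : IsEnumeration l) :
    l.length = Fintype.card V := by
  rw [← List.toFinset_card_of_nodup hl.1, ← Finset.card_univ]
  congr 1
  ext v; simp [hl.2 v]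

lemma exists_enumeration_of_linear_forest [Fintype V] [DecidableEq V] {α : Type*} [LinearOrder α]
    (R : V → V → Prop) (h : V → α) (hR : ∀ u v, R u v → h u < h v)
    (hout : ∀ u v w, R u v → R u w → v = w) (hin : ∀ u v w, R u w → R v w → u = v) :
    ∃ l : List V, IsEnumeration l ∧ ∀ u v, R u v → s(u, v) ∈ cycleEdges l := by
  obtain ⟨l, hnd, hmem, hl⟩ := exists_list_of_linear_forest R h hR hout hin Finset.univ
  refine ⟨l, ⟨hnd, fun v => (hmem v).2 (Finset.mem_univ v)⟩, fun u v huv => ?_⟩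
  obtain ⟨l₁, l₂, rfl⟩ := hl u (Finset.mem_univ u) v (Finset.mem_univ v) huv
  rw [cycleEdges_of_ne_nil (by simp)]
  exact Multiset.mem_cons_of_mem (mem_pathEdges_append_cons_cons l₁ l₂ u v)

lemma coe_edges_ofSupport (G : SimpleGraph V) {l : List V} (hne : l ≠ []) (hchain : l.IsChain G.Adj) :
    ((SimpleGraph.Walk.ofSupport l hne hchain).edges : Multiset (Sym2 V)) = pathEdges l := by
  induction l with
  | nil => exact absurd rfl hne
  | cons a l ih =>
    cases l with
    | nil => rfl
    | cons b l =>
      have := ih (by simp) hchain.of_cons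
      rw [pathEdges, ← this]
      rfl

lemma isChain_of_pathEdges (G : SimpleGraph V) {l : List V} (h : ∀ e ∈ pathEdges l, e ∈ G.edgeSet) :
    l.IsChain G.Adj := by
  induction l with
  | nil => exact .nil
  | cons a l ih =>
    cases l with
    | nil => exact .singleton _
    | cons b l =>
      simp only [pathEdges, Multiset.mem_cons, forall_eq_or_imp, SimpleGraph.mem_edgeSet] at h
      exact List.isChain_cons_cons.2 ⟨h.1, ih h.2⟩

variable [DecidableEq V] (G : SimpleGraph V) [DecidableRel G.Adj]

/-- The number of edges of a cyclic list missing from the graph. -/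
def missing (l : List V) : ℕ := (cycleEdges l).countP (· ∉ G.edgeSet)

/-- A missing edge of a cyclic list can be repaired by reversing a segment,
and the edge that is sacrificed can be chosen to avoid a small set of vertices. -/
lemma exists_improvement [Fintype V] {d : ℕ} (hd : G.IsRegularOfDegree d) (X : Finset V)
    (hX : 2 * X.card + Fintype.card V < 2 * d) {l : List V} (hl : IsEnumeration l)
    (hbad : missing G l ≠ 0) :
    ∃ l', IsEnumeration l' ∧ missing G l' < missing G l ∧
      ∃ v w, v ∉ X ∧ w ∉ X ∧
        ∀ e ∈ cycleEdges l, e ∈ G.edgeSet → e ∈ cycleEdges l' ∨ e = s(v, w) := by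
  obtain ⟨e, he, heG⟩ := Multiset.countP_pos.1 (Nat.pos_of_ne_zero hbad)
  obtain ⟨l', hne, hperm, hce, rfl⟩ := exists_perm_closing he
  have hl' := hl.perm hperm
  rw [missing, ← hce]
  clear hce hperm hbad he
  obtain ⟨x, l', rfl⟩ := List.exists_cons_of_ne_nil hne
  set z := (x :: l').getLast hne with hz
  rw [List.head_cons, SimpleGraph.mem_edgeSet] at heG
  have key : ∀ y : V, d ≤ (x :: l').countP (fun v => G.Adj y v ∧ v ∉ X) + X.card := by
    intro y
    rw [hl'.countP, ← hd y, ← SimpleGraph.card_neighborFinset_eq_degree]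
    have : G.neighborFinset y ⊆ Finset.univ.filter (fun v => G.Adj y v ∧ v ∉ X) ∪ X := by
      intro v hv
      simp only [Finset.mem_union, Finset.mem_filter, Finset.mem_univ, true_and]
      rw [SimpleGraph.mem_neighborFinset] at hv
      tauto
    exact (Finset.card_le_card this).trans (Finset.card_union_le _ _)
  have hlen := hl'.length
  rw [List.length_cons] at hlen
  obtain ⟨l₁, l₂, v, w, h, hv, hw⟩ := exists_consecutive
    (fun v => G.Adj z v ∧ v ∉ X) (fun v => G.Adj x v ∧ v ∉ X) x l' (by
      have h₁ := key z
      have h₂ := key x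
      rw [List.countP_cons (l := l')] at h₂
      simp only [SimpleGraph.irrefl, false_and, decide_false, Bool.false_eq_true, if_false] at h₂
      omega)
  simp only [decide_eq_true_eq] at hv hw
  obtain ⟨R, hR₁, hR₂⟩ := cycleEdges_reverse_segment (l₁ := l₁ ++ [v]) (l₂ := w :: l₂)
    (by simp) (by simp)
  have hz' : (w :: l₂).getLast (by simp) = z := by
    rw [hz]; simp only [h]
    rw [List.getLast_append_of_ne_nil]
  have hx' : (l₁ ++ [v]).head (by simp) = x := by
    cases l₁ <;> simp at h ⊢ <;> exact h.1.symm
  rw [hz', hx', List.getLast_concat, List.head_cons] at hR₁ hR₂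
  refine ⟨(l₁ ++ [v]) ++ (w :: l₂).reverse, hl'.perm ?_, ?_, v, w, hv.2, hw.2, ?_⟩
  · rw [h]; exact (List.reverse_perm _).append_left _
  · rw [missing, h, hR₁, hR₂]
    simp only [Multiset.countP_cons, SimpleGraph.mem_edgeSet, hv.1, hw.1, heG]
    simp only [not_true, not_false_eq_true, if_true, if_false]
    omega
  · intro e he heG'
    rw [h, hR₁] at he
    rw [hR₂]
    simp only [Multiset.mem_cons] at he ⊢
    rcases he with rfl | rfl | he
    · exact absurd heG' heG
    · exact Or.inr rfl
    · exact Or.inl (Or.inr (Or.inr he))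

lemma exists_hamiltonianCycle [Fintype V] (hV : 3 ≤ Fintype.card V) {l : List V}
    (hl : IsEnumeration l) (hbad : missing G l = 0) :
    ∃ (x : V) (c : G.Walk x x), c.IsHamiltonianCycle ∧ ∀ e ∈ cycleEdges l, e ∈ c.edges := by
  have hlen := hl.length
  have hne : l ≠ [] := by rintro rfl; simp at hlen; omega
  have hG : ∀ e ∈ cycleEdges l, e ∈ G.edgeSet := by
    simpa using Multiset.countP_eq_zero.1 hbad
  rw [cycleEdges_of_ne_nil hne] at hG ⊢
  have hchain : l.IsChain G.Adj :=
    isChain_of_pathEdges G fun e he => hG e (Multiset.mem_cons_of_mem he)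
  have hadj : G.Adj (l.getLast hne) (l.head hne) := hG _ (Multiset.mem_cons_self _ _)
  set p := SimpleGraph.Walk.ofSupport l hne hchain with hp
  have hsupp : p.support = l := SimpleGraph.Walk.support_ofSupport hne hchain
  have hpath : p.IsPath := by rw [SimpleGraph.Walk.isPath_def, hsupp]; exact hl.1
  have hplen : p.length + 1 = Fintype.card V := by
    rw [← SimpleGraph.Walk.length_support, hsupp, hlen]
  refine ⟨_, SimpleGraph.Walk.cons hadj p, ?_, ?_⟩
  · rw [SimpleGraph.Walk.isHamiltonianCycle_iff_isCycle_and_length_eq,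
      SimpleGraph.Walk.cons_isCycle_iff, SimpleGraph.Walk.length_cons]
    refine ⟨⟨hpath, fun h => ?_⟩, hplen⟩
    have := hpath.length_eq_one_of_mem_edges (by rwa [Sym2.eq_swap] at h)
    omega
  · intro e he
    rw [SimpleGraph.Walk.edges_cons, List.mem_cons]
    refine (Multiset.mem_cons.1 he).imp_right fun he => ?_
    rwa [← Multiset.mem_coe, coe_edges_ofSupport]

end

/-- A balanced nonnegative integer matrix is covered by as many permutations as its line sums. -/
lemma exists_perms_of_line_sums {V : Type*} [Fintype V] [DecidableEq V] (D : ℕ) (M : V → V → ℕ)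
    (hrow : ∀ u, ∑ v, M u v = D) (hcol : ∀ v, ∑ u, M u v = D) :
    ∃ σ : Fin D → Equiv.Perm V, ∀ u v, 0 < M u v → ∃ t, σ t u = v := by
  induction D generalizing M with
  | zero =>
    refine ⟨Fin.elim0, fun u v h => ?_⟩
    have := (Finset.sum_eq_zero_iff.1 (hrow u)) v (Finset.mem_univ v)
    omega
  | succ D ih =>
    have hall : ∀ S : Finset V,
        S.card ≤ (S.biUnion fun u => Finset.univ.filter fun v => 0 < M u v).card := by
      intro S
      set T := S.biUnion fun u => Finset.univ.filter fun v => 0 < M u v with hT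
      have h₁ : S.card * (D + 1) = ∑ u ∈ S, ∑ v ∈ T, M u v := by
        rw [← smul_eq_mul, ← Finset.sum_const]
        refine Finset.sum_congr rfl fun u hu => ?_
        rw [← hrow u]
        refine (Finset.sum_subset (Finset.subset_univ T) fun v _ hv => ?_).symm
        by_contra h
        exact hv (Finset.mem_biUnion.2 ⟨u, hu, by simpa using Nat.pos_of_ne_zero h⟩)
      have h₂ : ∑ u ∈ S, ∑ v ∈ T, M u v ≤ T.card * (D + 1) := by
        rw [Finset.sum_comm, ← smul_eq_mul, ← Finset.sum_const]
        refine Finset.sum_le_sum fun v _ => ?_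
        rw [← hcol v]
        exact Finset.sum_le_sum_of_subset (Finset.subset_univ S)
      exact Nat.le_of_mul_le_mul_right (h₁ ▸ h₂) (Nat.succ_pos D)
    obtain ⟨f, hinj, hf⟩ := (Finset.all_card_le_biUnion_card_iff_exists_injective _).1 hall
    let τ : Equiv.Perm V := Equiv.ofBijective f (Finite.injective_iff_bijective.1 hinj)
    have hτ : ∀ u, 0 < M u (τ u) := fun u => (Finset.mem_filter.1 (hf u)).2
    have hle : ∀ u v, (if τ u = v then 1 else 0) ≤ M u v := by
      intro u v
      split_ifs with h
      · exact h ▸ hτ u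
      · exact Nat.zero_le _
    obtain ⟨σ, hσ⟩ := ih (fun u v => M u v - if τ u = v then 1 else 0)
      (fun u => by
        rw [Finset.sum_tsub_distrib _ fun v _ => hle u v, hrow]
        simp)
      (fun v => by
        rw [Finset.sum_tsub_distrib _ fun u _ => hle u v, hcol]
        simp [← Equiv.eq_symm_apply])
    refine ⟨Fin.cons τ σ, fun u v huv => ?_⟩
    by_cases h : τ u = v
    · exact ⟨0, by simpa using h⟩
    · obtain ⟨t, ht⟩ := hσ u v (by simpa [h] using huv)
      exact ⟨t.succ, by simpa using ht⟩

/-- A matrix with bounded line sums is dominated by one with constant line sums. -/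
lemma exists_balanced_ge {V : Type*} [Fintype V] [DecidableEq V] (D : ℕ) (M : V → V → ℕ)
    (hrow : ∀ u, ∑ v, M u v ≤ D) (hcol : ∀ v, ∑ u, M u v ≤ D) :
    ∃ M' : V → V → ℕ, (∀ u v, M u v ≤ M' u v) ∧
      (∀ u, ∑ v, M' u v = D) ∧ (∀ v, ∑ u, M' u v = D) := by
  induction hN : Fintype.card V * D - ∑ u, ∑ v, M u v generalizing M with
  | zero =>
    have h₁ : ∑ u, ∑ v, M u v = ∑ _u : V, D := by
      refine le_antisymm (Finset.sum_le_sum fun u _ => hrow u) ?_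
      simp; omega
    have h₂ : ∑ v, ∑ u, M u v = ∑ _v : V, D := by rw [Finset.sum_comm]; exact h₁
    exact ⟨M, fun _ _ => le_rfl,
      fun u => (Finset.sum_eq_sum_iff_of_le fun u _ => hrow u).1 h₁ u (Finset.mem_univ u),
      fun v => (Finset.sum_eq_sum_iff_of_le fun v _ => hcol v).1 h₂ v (Finset.mem_univ v)⟩
  | succ N ih =>
    have hlt : ∑ u, ∑ v, M u v < ∑ _u : V, D := by simp; omega
    obtain ⟨a, -, ha⟩ := Finset.exists_lt_of_sum_lt hlt
    rw [Finset.sum_comm] at hlt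
    obtain ⟨b, -, hb⟩ := Finset.exists_lt_of_sum_lt hlt
    have hr : ∀ u, ∑ v, (M u v + if u = a ∧ v = b then 1 else 0) =
        ∑ v, M u v + if u = a then 1 else 0 := by
      intro u
      rw [Finset.sum_add_distrib]
      by_cases h : u = a <;> simp [h]
    have hc : ∀ v, ∑ u, (M u v + if u = a ∧ v = b then 1 else 0) =
        ∑ u, M u v + if v = b then 1 else 0 := by
      intro v
      rw [Finset.sum_add_distrib]
      by_cases h : v = b <;> simp [h]
    obtain ⟨M', hM, h⟩ := ih (fun u v => M u v + if u = a ∧ v = b then 1 else 0)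
      (fun u => by
        rw [hr]; split_ifs with h
        · subst h; omega
        · simpa using hrow u)
      (fun v => by
        rw [hc]; split_ifs with h
        · subst h; omega
        · simpa using hcol v)
      (by
        simp only [hr]
        rw [Finset.sum_add_distrib]
        simp; omega)
    exact ⟨M', fun u v => (Nat.le_add_right _ _).trans (hM u v), h⟩

/-- A digraph with in- and out-degrees at most `D` is covered by `D` permutations. -/
lemma exists_perms_cover {V : Type*} [Fintype V] [DecidableEq V] (D : ℕ) (A : V → V → Prop)
    [DecidableRel A] (hout : ∀ u, (Finset.univ.filter fun v => A u v).card ≤ D)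
    (hin : ∀ v, (Finset.univ.filter fun u => A u v).card ≤ D) :
    ∃ σ : Fin D → Equiv.Perm V, ∀ u v, A u v → ∃ t, σ t u = v := by
  obtain ⟨M, hM, hrow, hcol⟩ := exists_balanced_ge D (fun u v => if A u v then 1 else 0)
    (fun u => by simpa using hout u) (fun v => by simpa using hin v)
  obtain ⟨σ, hσ⟩ := exists_perms_of_line_sums D M hrow hcol
  exact ⟨σ, fun u v h => hσ u v (by simpa [h, Nat.succ_le_iff] using hM u v)⟩

/-- The position of a class on a zigzag path through `2 * m` cyclically arranged classes. -/
def zigzag (m y : ℕ) : ℕ := if y = 0 then 0 else if y ≤ m then 2 * y - 1 else 2 * (2 * m - y)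

lemma zigzag_injOn {m y z : ℕ} (hy : y < 2 * m) (hz : z < 2 * m)
    (h : zigzag m y = zigzag m z) : y = z := by
  unfold zigzag at h
  split_ifs at h <;> omega

/-- The position of a class `i` on the `p`-th zigzag path. -/
def zigzagPos (m p i : ℕ) : ℕ := zigzag m ((i + (2 * m - p)) % (2 * m))

lemma zigzagPos_injOn {m p i j : ℕ} (hp : p < m) (hi : i < 2 * m) (hj : j < 2 * m)
    (h : zigzagPos m p i = zigzagPos m p j) : i = j := by
  have h := zigzag_injOn (Nat.mod_lt _ (by omega)) (Nat.mod_lt _ (by omega)) h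
  rcases lt_or_ge i p with hi' | hi' <;> rcases lt_or_ge j p with hj' | hj'
  · rw [Nat.mod_eq_of_lt (by omega), Nat.mod_eq_of_lt (by omega)] at h; omega
  · rw [Nat.mod_eq_of_lt (a := i + _) (by omega), Nat.mod_eq_sub_mod (a := j + _) (by omega),
      Nat.mod_eq_of_lt (by omega)] at h; omega
  · rw [Nat.mod_eq_of_lt (a := j + _) (by omega), Nat.mod_eq_sub_mod (a := i + _) (by omega),
      Nat.mod_eq_of_lt (by omega)] at h; omega
  · rw [Nat.mod_eq_sub_mod (a := j + _) (by omega), Nat.mod_eq_sub_mod (a := i + _) (by omega),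
      Nat.mod_eq_of_lt (by omega), Nat.mod_eq_of_lt (by omega)] at h; omega

/-- Every pair of classes is consecutive on one of the zigzag paths. -/
lemma exists_zigzagPos_consecutive {m i j : ℕ} (hi : i < 2 * m) (hj : j < 2 * m) (hij : i ≠ j) :
    ∃ p < m, zigzagPos m p j = zigzagPos m p i + 1 ∨ zigzagPos m p i = zigzagPos m p j + 1 := by
  have hmod : ∀ p x, p < m → x < 2 * m →
      (x + (2 * m - p)) % (2 * m) = if x < p then x + 2 * m - p else x - p := by
    intro p x hp hx
    split_ifs with h
    · rw [Nat.mod_eq_of_lt (by omega)]; omega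
    · rw [Nat.mod_eq_sub_mod (by omega), Nat.mod_eq_of_lt (by omega)]; omega
  by_cases hs : (i + j) / 2 < m
  · refine ⟨(i + j) / 2, hs, ?_⟩
    unfold zigzagPos
    rw [hmod _ _ hs hi, hmod _ _ hs hj]
    unfold zigzag
    split_ifs <;> omega
  · have hs' : (i + j) / 2 - m < m := by omega
    refine ⟨(i + j) / 2 - m, hs', ?_⟩
    unfold zigzagPos
    rw [hmod _ _ hs' hi, hmod _ _ hs' hj]
    unfold zigzag
    split_ifs <;> omega

section

lemma card_filter_mem_insert_le {V : Type*} [DecidableEq V] (Q : Finset (Sym2 V)) (e : Sym2 V) (v : V) :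
    ((insert e Q).filter (v ∈ ·)).card ≤ (Q.filter (v ∈ ·)).card + if v ∈ e then 1 else 0 := by
  rw [Finset.filter_insert]
  split_ifs
  · exact Finset.card_insert_le _ _
  · exact le_rfl

variable {V : Type*} [Fintype V] [DecidableEq V] (G : SimpleGraph V) [DecidableRel G.Adj]

/-- A cyclic enumeration can be turned into one using only edges of `G`, without losing edges that
meet a small set of vertices. -/
lemma exists_repair {d : ℕ} (hd : G.IsRegularOfDegree d) (X : Finset V)
    (hX : 2 * X.card + Fintype.card V < 2 * d) {l : List V} (hl : IsEnumeration l) :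
    ∃ l', IsEnumeration l' ∧ missing G l' = 0 ∧
      ∀ e ∈ cycleEdges l, e ∈ G.edgeSet → (∃ v ∈ e, v ∈ X) → e ∈ cycleEdges l' := by
  induction hN : missing G l using Nat.strong_induction_on generalizing l with
  | _ N ih =>
    by_cases h0 : missing G l = 0
    · exact ⟨l, hl, h0, fun e he _ _ => he⟩
    · obtain ⟨l₁, hl₁, hlt, v, w, hv, hw, hkeep⟩ := exists_improvement G hd X hX hl h0
      obtain ⟨l', hl', hm, hkeep'⟩ := ih _ (hN ▸ hlt) hl₁ rfl
      refine ⟨l', hl', hm, fun e he heG hX => ?_⟩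
      rcases hkeep e he heG with h | rfl
      · exact hkeep' e h heG hX
      · obtain ⟨u, hu, huX⟩ := hX
        rcases Sym2.mem_iff.1 hu with rfl | rfl
        · exact absurd huX hv
        · exact absurd huX hw

lemma sum_card_filter_mem_le (Q : Finset (Sym2 V)) :
    ∑ v, (Q.filter (v ∈ ·)).card ≤ 2 * Q.card := by
  have := Finset.sum_card_bipartiteAbove_eq_sum_card_bipartiteBelow (s := Finset.univ) (t := Q)
    (fun (v : V) (e : Sym2 V) => v ∈ e)
  simp only [Finset.bipartiteAbove, Finset.bipartiteBelow] at this
  rw [this, mul_comm, ← smul_eq_mul, ← Finset.sum_const]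
  refine Finset.sum_le_sum fun e _ => ?_
  induction e with
  | _ a b =>
    have : Finset.univ.filter (fun v => v ∈ s(a, b)) ⊆ {a, b} := by
      intro v; simp
    exact (Finset.card_le_card this).trans Finset.card_le_two

/-- A family of cyclic enumerations with few missing edges in total can be turned into one using
only edges of `G` so that the lost edges form a graph of small maximum degree. -/
lemma exists_repair_family {ι : Type*} [Fintype ι] [DecidableEq ι] {d : ℕ}
    (hd : G.IsRegularOfDegree d) (B Δ : ℕ)
    (hB : ∀ x, x * Δ ≤ 2 * B → 2 * x + Fintype.card V < 2 * d)
    (l : ι → List V) (hl : ∀ i, IsEnumeration (l i)) (Q : Finset (Sym2 V))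
    (hQB : Q.card + ∑ i, missing G (l i) ≤ B) (hQ : ∀ v, (Q.filter (v ∈ ·)).card ≤ Δ) :
    ∃ (l' : ι → List V) (Q' : Finset (Sym2 V)), (∀ i, IsEnumeration (l' i)) ∧
      (∀ i, missing G (l' i) = 0) ∧ (∀ v, (Q'.filter (v ∈ ·)).card ≤ Δ) ∧ Q ⊆ Q' ∧
      ∀ i, ∀ e ∈ cycleEdges (l i), e ∈ G.edgeSet → e ∈ cycleEdges (l' i) ∨ e ∈ Q' := by
  induction hN : ∑ i, missing G (l i) using Nat.strong_induction_on generalizing l Q with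
  | _ N ih =>
    by_cases h0 : ∀ i, missing G (l i) = 0
    · exact ⟨l, Q, hl, h0, hQ, subset_rfl, fun i e he _ => Or.inl he⟩
    · push Not at h0
      obtain ⟨i, hi⟩ := h0
      set X := Finset.univ.filter fun v => Δ ≤ (Q.filter (v ∈ ·)).card with hXdef
      have hX : X.card * Δ ≤ 2 * B := by
        calc X.card * Δ = ∑ _v ∈ X, Δ := by simp
          _ ≤ ∑ v ∈ X, (Q.filter (v ∈ ·)).card :=
            Finset.sum_le_sum fun v hv => (Finset.mem_filter.1 hv).2
          _ ≤ ∑ v, (Q.filter (v ∈ ·)).card :=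
            Finset.sum_le_sum_of_subset (Finset.subset_univ X)
          _ ≤ 2 * Q.card := sum_card_filter_mem_le Q
          _ ≤ 2 * B := by omega
      obtain ⟨l₁, hl₁, hlt, v, w, hv, hw, hkeep⟩ :=
        exists_improvement G hd X (hB _ hX) (hl i) hi
      have hlt' : ∑ j, missing G (Function.update l i l₁ j) < ∑ j, missing G (l j) := by
        refine Finset.sum_lt_sum (fun j _ => ?_) ⟨i, Finset.mem_univ i, by simpa using hlt⟩
        by_cases hj : j = i
        · subst hj; simpa using hlt.le
        · simp [hj]
      have hQ₁ : ∀ u, ((insert s(v, w) Q).filter (u ∈ ·)).card ≤ Δ := by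
        intro u
        refine (card_filter_mem_insert_le Q _ u).trans ?_
        split_ifs with hu
        · have : u ∉ X := by rcases Sym2.mem_iff.1 hu with rfl | rfl <;> assumption
          simp only [hXdef, Finset.mem_filter, Finset.mem_univ, true_and] at this
          omega
        · exact hQ u
      obtain ⟨l', Q', h₁, h₂, h₃, h₄, h₅⟩ := ih _ (hN ▸ hlt') (Function.update l i l₁)
        (fun j => by
          by_cases hj : j = i
          · subst hj; simpa using hl₁
          · simpa [hj] using hl j)
        (insert s(v, w) Q)
        (by have := Finset.card_insert_le s(v, w) Q; omega) hQ₁ rfl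
      refine ⟨l', Q', h₁, h₂, h₃, (Finset.subset_insert _ _).trans h₄, fun j e he heG => ?_⟩
      by_cases hj : j = i
      · subst hj
        rcases hkeep e he heG with h | rfl
        · exact h₅ j e (by simpa using h) heG
        · exact Or.inr (h₄ (Finset.mem_insert_self _ _))
      · exact h₅ j e (by simpa [hj] using he) heG

end

lemma sum_pow_card_label {V : Type*} [Fintype V] [DecidableEq V] {k : ℕ} (hk : 0 < k)
    (N : Finset V) (j : Fin k) (x : ℝ) :
    ∑ l : V → Fin k, (1 + x) ^ (N.filter fun u => l u = j).card =
      (k : ℝ) ^ Fintype.card V * (1 + x / k) ^ N.card := by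
  have hk' : (k : ℝ) ≠ 0 := by positivity
  have h₁ : ∀ l : V → Fin k, (1 + x) ^ (N.filter fun u => l u = j).card =
      ∏ u, if u ∈ N ∧ l u = j then 1 + x else 1 := by
    intro l
    rw [Finset.prod_ite, Finset.prod_const_one, mul_one, Finset.prod_const]
    congr 2
    ext u; simp
  have h₂ : ∀ u, ∑ i : Fin k, (if u ∈ N ∧ i = j then 1 + x else 1) =
      k * if u ∈ N then 1 + x / k else 1 := by
    intro u
    by_cases hu : u ∈ N
    · have : ∀ i : Fin k, (if i = j then 1 + x else 1) = 1 + if i = j then x else 0 := by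
        intro i; split_ifs <;> simp
      simp only [hu, true_and, if_true, this, Finset.sum_add_distrib]
      simp
      field_simp
    · simp [hu]
  simp only [h₁]
  rw [← Fintype.prod_sum fun u i => if u ∈ N ∧ i = j then 1 + x else 1]
  simp only [h₂]
  rw [Finset.prod_mul_distrib, Finset.prod_const, Finset.prod_ite, Finset.prod_const_one, mul_one,
    Finset.prod_const, Finset.card_univ]
  simp

/-- In a large graph whose neighbourhoods all have size `d`, the vertices can be labelled so that
every neighbourhood meets every label class in at most about `d / k` vertices. -/
lemma exists_balanced_labelling {k : ℕ} (hk : 0 < k) {γ : ℝ} (hγ : 0 < γ) :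
    ∃ n₀ : ℕ, ∀ (V : Type) [Fintype V] [DecidableEq V] (N : V → Finset V) (d : ℕ),
      n₀ ≤ Fintype.card V → (∀ v, (N v).card = d) →
      ∃ l : V → Fin k, ∀ v j,
        ((N v).filter fun u => l u = j).card ≤ (d : ℝ) / k + γ * Fintype.card V := by
  have hk' : (1 : ℝ) ≤ k := by exact_mod_cast hk
  obtain ⟨δ, hδ⟩ : ∃ δ, δ = γ / (2 * (1 + γ)) := ⟨_, rfl⟩
  have hδ0 : 0 < δ := by rw [hδ]; positivity
  have hδγ : δ * (1 + γ) = γ / 2 := by rw [hδ]; field_simp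
  set c := δ * γ / 2 with hc
  have hc0 : 0 < c := by positivity
  obtain ⟨n₀, hn₀⟩ := exists_nat_gt (2 * k / c ^ 2)
  refine ⟨n₀ + 1, fun V _ _ N d hn hN => ?_⟩
  by_contra! hcon
  set n : ℝ := (Fintype.card V : ℝ) with hn'
  have hnpos : 0 < n := by rw [hn']; exact_mod_cast (by omega)
  have hnlarge : 2 * k / c ^ 2 < n := by
    refine hn₀.trans_le ?_
    rw [hn']; exact_mod_cast (by omega)
  have hdn : (d : ℝ) ≤ n := by
    obtain ⟨v⟩ : Nonempty V := Fintype.card_pos_iff.1 (by omega)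
    rw [hn', ← hN v]; exact_mod_cast Finset.card_le_univ _
  set s : ℝ := d / k + γ * n with hs
  have hlog : δ - δ ^ 2 ≤ Real.log (1 + δ) := by
    refine le_trans ?_ (Real.one_sub_inv_le_log_of_pos (by linarith))
    have : 1 - (1 + δ)⁻¹ = δ / (1 + δ) := by field_simp; ring
    rw [this, le_div_iff₀ (by linarith)]
    nlinarith [pow_pos hδ0 3]
  have hbig : ∀ l : V → Fin k, Real.exp (s * Real.log (1 + δ)) ≤
      ∑ v, ∑ j, (1 + δ) ^ ((N v).filter fun u => l u = j).card := by
    intro l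
    obtain ⟨v, j, hvj⟩ := hcon l
    have h₁ : Real.exp (s * Real.log (1 + δ)) ≤
        (1 + δ) ^ ((N v).filter fun u => l u = j).card := by
      rw [← Real.rpow_natCast, Real.rpow_def_of_pos (by linarith), mul_comm]
      exact Real.exp_le_exp.2
        (mul_le_mul_of_nonneg_left hvj.le (Real.log_nonneg (by linarith)))
    refine h₁.trans ?_
    refine le_trans ?_ (Finset.single_le_sum (f := fun v => ∑ j, (1 + δ) ^
      ((N v).filter fun u => l u = j).card) (fun v _ => by positivity) (Finset.mem_univ v))
    exact Finset.single_le_sum (f := fun j => (1 + δ) ^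
      ((N v).filter fun u => l u = j).card) (fun v _ => by positivity) (Finset.mem_univ j)
  have hsum := Finset.sum_le_sum fun (l : V → Fin k) (_ : l ∈ Finset.univ) => hbig l
  rw [Finset.sum_const, Finset.sum_comm] at hsum
  have hinner : ∀ v, ∑ l : V → Fin k, ∑ j, (1 + δ) ^ ((N v).filter fun u => l u = j).card =
      k * ((k : ℝ) ^ Fintype.card V * (1 + δ / k) ^ d) := by
    intro v
    rw [Finset.sum_comm]
    simp only [sum_pow_card_label hk, hN]
    simp
  simp only [hinner] at hsum
  simp only [Finset.card_univ, Fintype.card_fun, Fintype.card_fin, Finset.sum_const,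
    nsmul_eq_mul, Nat.cast_pow] at hsum
  have hpow : (1 + δ / k) ^ d ≤ Real.exp (δ * (d / k)) := by
    have : δ * ((d : ℝ) / k) = d * (δ / k) := by ring
    rw [this, Real.exp_nat_mul]
    refine pow_le_pow_left₀ (by positivity) ?_ d
    linarith [Real.add_one_le_exp (δ / k)]
  have h₁ : Real.exp (s * Real.log (1 + δ)) ≤ n * k * Real.exp (δ * (d / k)) := by
    have hkn : (0 : ℝ) < (k : ℝ) ^ Fintype.card V := by positivity
    refine le_of_mul_le_mul_left ?_ hkn
    refine hsum.trans ?_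
    have : (0 : ℝ) ≤ n * k * (k : ℝ) ^ Fintype.card V := by positivity
    nlinarith [mul_le_mul_of_nonneg_left hpow this]
  have hdk : (d : ℝ) / k ≤ n := (div_le_self (by positivity) hk').trans hdn
  have h₂ : c * n ≤ s * Real.log (1 + δ) - δ * (d / k) := by
    have h₃ : s * (δ - δ ^ 2) ≤ s * Real.log (1 + δ) :=
      mul_le_mul_of_nonneg_left hlog (by positivity)
    have h₄ : c * n ≤ s * (δ - δ ^ 2) - δ * (d / k) := by
      have h₅ : s * (δ - δ ^ 2) - δ * (d / k) =
          δ * γ * n - δ ^ 2 * (d / k + γ * n) := by rw [hs]; ring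
      have h₆ : δ ^ 2 * (d / k + γ * n) ≤ δ ^ 2 * ((1 + γ) * n) := by
        refine mul_le_mul_of_nonneg_left ?_ (by positivity)
        linarith
      have h₇ : δ ^ 2 * ((1 + γ) * n) = c * n := by
        rw [hc]; linear_combination δ * n * hδγ
      have h₈ : δ * γ * n = 2 * (c * n) := by rw [hc]; ring
      linarith
    linarith
  have h₃ : Real.exp (c * n) ≤ n * k := by
    refine (Real.exp_le_exp.2 h₂).trans ?_
    rw [Real.exp_sub, div_le_iff₀ (Real.exp_pos _)]
    exact h₁
  have h₄ := Real.quadratic_le_exp_of_nonneg (x := c * n) (by positivity)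
  rw [div_lt_iff₀ (by positivity)] at hnlarge
  have h₅ : n * (2 * k) < n * (n * c ^ 2) := mul_lt_mul_of_pos_left hnlarge hnpos
  have h₆ : 0 < c * n := by positivity
  nlinarith

section

variable {V : Type*} [Fintype V] [DecidableEq V] (G : SimpleGraph V) [DecidableRel G.Adj]

/-- If every neighbourhood meets every one of `2 * m` label classes in at most `D` vertices, then
all edges between different classes are covered by `m * D` cyclic enumerations. -/
lemma exists_enumerations_cover {m D : ℕ} (c : V → Fin (2 * m))
    (hc : ∀ v j, ((G.neighborFinset v).filter fun u => c u = j).card ≤ D) :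
    ∃ l : Fin m × Fin D → List V, (∀ i, IsEnumeration (l i)) ∧
      ∀ u v, G.Adj u v → c u ≠ c v → ∃ i, s(u, v) ∈ cycleEdges (l i) := by
  let A : Fin m → V → V → Prop := fun p u v =>
    G.Adj u v ∧ zigzagPos m p (c v) = zigzagPos m p (c u) + 1
  have hclass : ∀ (p : Fin m) {v w : V}, zigzagPos m p (c v) = zigzagPos m p (c w) → c v = c w :=
    fun p v w h => Fin.ext (zigzagPos_injOn p.2 (c v).2 (c w).2 h)
  have hsmall : ∀ (S : Finset V) (u : V), (∀ v ∈ S, G.Adj u v) →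
      (∀ v ∈ S, ∀ w ∈ S, c v = c w) → S.card ≤ D := by
    intro S u hadj hS
    rcases S.eq_empty_or_nonempty with rfl | ⟨w, hw⟩
    · simp
    · refine (Finset.card_le_card fun v hv => ?_).trans (hc u (c w))
      rw [Finset.mem_filter, SimpleGraph.mem_neighborFinset]
      exact ⟨hadj v hv, hS v hv w hw⟩
  have hσ : ∀ p, ∃ σ : Fin D → Equiv.Perm V, ∀ u v, A p u v → ∃ t, σ t u = v := by
    intro p
    classical
    refine exists_perms_cover D (A p) (fun u => hsmall _ u ?_ ?_) (fun u => hsmall _ u ?_ ?_)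
    · intro v hv
      exact (Finset.mem_filter.1 hv).2.1
    · intro v hv w hw
      exact hclass p ((Finset.mem_filter.1 hv).2.2.trans (Finset.mem_filter.1 hw).2.2.symm)
    · intro v hv
      exact (Finset.mem_filter.1 hv).2.1.symm
    · intro v hv w hw
      exact hclass p (Nat.succ_injective
        ((Finset.mem_filter.1 hv).2.2.symm.trans (Finset.mem_filter.1 hw).2.2))
  choose σ hσ using hσ
  have hl : ∀ i : Fin m × Fin D, ∃ l : List V, IsEnumeration l ∧
      ∀ u v, (A i.1 u v ∧ σ i.1 i.2 u = v) → s(u, v) ∈ cycleEdges l := by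
    intro i
    refine exists_enumeration_of_linear_forest _ (fun v => zigzagPos m i.1 (c v)) ?_ ?_ ?_
    · rintro u v ⟨⟨-, h⟩, -⟩
      omega
    · rintro u v w ⟨-, rfl⟩ ⟨-, rfl⟩
      rfl
    · rintro u v w ⟨-, hu⟩ ⟨-, hv⟩
      exact (σ i.1 i.2).injective (hu.trans hv.symm)
  choose l hl hcov using hl
  refine ⟨l, hl, fun u v huv hne => ?_⟩
  obtain ⟨p, hp, h⟩ := exists_zigzagPos_consecutive (c u).2 (c v).2
    (fun h => hne (Fin.ext h))
  rcases h with h | h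
  · have hA : A ⟨p, hp⟩ u v := ⟨huv, h⟩
    obtain ⟨t, ht⟩ := hσ _ _ _ hA
    exact ⟨(⟨p, hp⟩, t), hcov (⟨p, hp⟩, t) u v ⟨hA, ht⟩⟩
  · have hA : A ⟨p, hp⟩ v u := ⟨huv.symm, h⟩
    obtain ⟨t, ht⟩ := hσ _ _ _ hA
    exact ⟨(⟨p, hp⟩, t), Sym2.eq_swap ▸ hcov (⟨p, hp⟩, t) v u ⟨hA, ht⟩⟩

lemma card_present_add_missing {l : List V} (hl : IsEnumeration l) :
    ((cycleEdges l).toFinset.filter (· ∈ G.edgeSet)).card + missing G l ≤ Fintype.card V := by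
  have h₁ : ((cycleEdges l).toFinset.filter (· ∈ G.edgeSet)).card ≤
      (cycleEdges l).countP (· ∈ G.edgeSet) := by
    rw [Multiset.countP_eq_card_filter, ← Multiset.toFinset_filter]
    exact Multiset.toFinset_card_le _
  have h₂ := Multiset.card_eq_countP_add_countP (· ∈ G.edgeSet) (cycleEdges l)
  rw [card_cycleEdges, hl.length] at h₂
  unfold missing
  omega

/-- Cyclic enumerations covering most edges of `G` have few missing edges in total. -/
lemma sum_missing_le {ι κ : Type*} [Fintype ι] [DecidableEq κ] {d D : ℕ}
    (hd : G.IsRegularOfDegree d) (c : V → κ)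
    (hc : ∀ v j, ((G.neighborFinset v).filter fun u => c u = j).card ≤ D)
    (l : ι → List V) (hl : ∀ i, IsEnumeration (l i))
    (hcov : ∀ u v, G.Adj u v → c u ≠ c v → ∃ i, s(u, v) ∈ cycleEdges (l i)) :
    2 * ∑ i, missing G (l i) + Fintype.card V * d ≤
      2 * (Fintype.card V * Fintype.card ι) + Fintype.card V * D := by
  classical
  let H : SimpleGraph V :=
    { Adj := fun u v => G.Adj u v ∧ c u ≠ c v
      symm := ⟨fun u v h => ⟨h.1.symm, h.2.symm⟩⟩
      loopless := ⟨fun u h => G.irrefl h.1⟩ }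
  have hdeg : ∀ v, d ≤ H.degree v + D := by
    intro v
    rw [← hd v, ← SimpleGraph.card_neighborFinset_eq_degree,
      ← SimpleGraph.card_neighborFinset_eq_degree]
    refine le_trans (Finset.card_le_card (t := H.neighborFinset v ∪
      (G.neighborFinset v).filter fun u => c u = c v) fun u hu => ?_)
      ((Finset.card_union_le _ _).trans (Nat.add_le_add_left (hc v _) _))
    simp only [Finset.mem_union, Finset.mem_filter, SimpleGraph.mem_neighborFinset] at hu ⊢
    by_cases h : c u = c v
    · exact Or.inr ⟨hu, h⟩
    · exact Or.inl ⟨hu, fun h' => h h'.symm⟩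
  have h₁ : Fintype.card V * d ≤ 2 * H.edgeFinset.card + Fintype.card V * D := by
    rw [← H.sum_degrees_eq_twice_card_edges]
    calc Fintype.card V * d = ∑ _v : V, d := by simp
      _ ≤ ∑ v, (H.degree v + D) := Finset.sum_le_sum fun v _ => hdeg v
      _ = _ := by rw [Finset.sum_add_distrib]; simp
  have h₂ : H.edgeFinset ⊆ Finset.univ.biUnion fun i =>
      (cycleEdges (l i)).toFinset.filter (· ∈ G.edgeSet) := by
    intro e he
    induction e with
    | _ u v =>
      have he : G.Adj u v ∧ c u ≠ c v := by simpa [H] using he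
      obtain ⟨i, hi⟩ := hcov u v he.1 he.2
      simp only [Finset.mem_biUnion, Finset.mem_filter, Finset.mem_univ, true_and,
        Multiset.mem_toFinset]
      exact ⟨i, hi, he.1⟩
  have h₃ := (Finset.card_le_card h₂).trans Finset.card_biUnion_le
  have h₄ : ∑ i, (((cycleEdges (l i)).toFinset.filter (· ∈ G.edgeSet)).card + missing G (l i)) ≤
      Fintype.card V * Fintype.card ι := by
    refine (Finset.sum_le_sum fun i _ => card_present_add_missing G (hl i)).trans ?_
    simp [mul_comm]
  rw [Finset.sum_add_distrib] at h₄
  omega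

/-- The edges of a sparse subgraph of a dense graph are covered by few Hamilton cycles. -/
lemma exists_cover_sparse {d Δ s q : ℕ} (hd : G.IsRegularOfDegree d)
    (hs : 2 * s + Fintype.card V < 2 * d) (hq : Fintype.card V ≤ q * s)
    (F : V → V → Prop) [DecidableRel F] (hsymm : ∀ u v, F u v → F v u)
    (hF : ∀ u v, F u v → G.Adj u v) (hΔ : ∀ u, (Finset.univ.filter fun v => F u v).card ≤ Δ) :
    ∃ l : Fin Δ × Fin q → List V, (∀ i, IsEnumeration (l i)) ∧ (∀ i, missing G (l i) = 0) ∧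
      ∀ u v, F u v → ∃ i, s(u, v) ∈ cycleEdges (l i) := by
  set x := Fintype.equivFin V
  obtain ⟨σ, hσ⟩ := exists_perms_cover Δ (fun u v => F u v ∧ x u < x v)
    (fun u => (Finset.card_le_card fun v hv => by
      simp only [Finset.mem_filter] at hv ⊢; exact ⟨hv.1, hv.2.1⟩).trans (hΔ u))
    (fun u => (Finset.card_le_card fun v hv => by
      simp only [Finset.mem_filter] at hv ⊢; exact ⟨hv.1, hsymm _ _ hv.2.1⟩).trans (hΔ u))
  have hl : ∀ i : Fin Δ × Fin q, ∃ l : List V, IsEnumeration l ∧ missing G l = 0 ∧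
      ∀ u v, F u v → x u < x v → σ i.1 u = v → (x u : ℕ) / s = i.2 → s(u, v) ∈ cycleEdges l := by
    intro i
    obtain ⟨l, hl, hcov⟩ := exists_enumeration_of_linear_forest
      (fun u v => x u < x v ∧ σ i.1 u = v) x (fun _ _ h => h.1)
      (by rintro u v w ⟨-, rfl⟩ ⟨-, rfl⟩; rfl)
      (by rintro u v w ⟨-, hu⟩ ⟨-, hv⟩; exact (σ i.1).injective (hu.trans hv.symm))
    set X := Finset.univ.filter fun u => (x u : ℕ) / s = i.2
    have hX : X.card ≤ s := by
      rcases Nat.eq_zero_or_pos s with rfl | hs0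
      · have : IsEmpty V := Fintype.card_eq_zero_iff.1 (by simpa using hq)
        simp [Finset.eq_empty_of_isEmpty]
      · have : X.card ≤ (Finset.Ico (i.2 * s) (i.2 * s + s)).card := by
          refine Finset.card_le_card_of_injOn (fun u => (x u : ℕ)) (fun u hu => ?_)
            (fun u _ v _ h => x.injective (Fin.ext h))
          have hu : (x u : ℕ) / s = i.2 := (Finset.mem_filter.1 hu).2
          rw [Finset.mem_coe, Finset.mem_Ico, ← hu]
          exact ⟨Nat.div_mul_le_self _ _, by
            have := Nat.lt_div_mul_add (a := x u) hs0; omega⟩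
        simpa using this
    obtain ⟨l', hl', hm, hkeep⟩ := exists_repair G hd X (by omega) hl
    refine ⟨l', hl', hm, fun u v hF' huv hσ' hu => hkeep _ (hcov u v ⟨huv, hσ'⟩) (hF u v hF')
      ⟨u, by simp, by simpa [X] using hu⟩⟩
  choose l hl hm hcov using hl
  have hmain : ∀ u v, F u v → x u < x v → ∃ i, s(u, v) ∈ cycleEdges (l i) := by
    intro u v huv hlt
    obtain ⟨t, ht⟩ := hσ u v ⟨huv, hlt⟩
    have hdiv : (x u : ℕ) / s < q :=
      Nat.div_lt_of_lt_mul (by rw [mul_comm]; exact (x u).2.trans_le hq)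
    exact ⟨(t, ⟨_, hdiv⟩), hcov (t, ⟨_, hdiv⟩) u v huv hlt ht rfl⟩
  refine ⟨l, hl, hm, fun u v huv => ?_⟩
  rcases lt_trichotomy (x u) (x v) with h | h | h
  · exact hmain u v huv h
  · exact absurd (x.injective h) (hF u v huv).ne
  · obtain ⟨i, hi⟩ := hmain v u (hsymm u v huv) h
    exact ⟨i, Sym2.eq_swap ▸ hi⟩

/-- A Hamilton cover obtained from a vertex labelling that splits all neighbourhoods evenly. -/
lemma exists_hamilton_cover_of_labelling {d m D Δ s q : ℕ} (hV : 3 ≤ Fintype.card V)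
    (hd : G.IsRegularOfDegree d) (c : V → Fin (2 * m))
    (hc : ∀ v j, ((G.neighborFinset v).filter fun u => c u = j).card ≤ D)
    (hs : 2 * s + Fintype.card V < 2 * d) (hq : Fintype.card V ≤ q * s)
    (hΔ : ∀ x, x * Δ + Fintype.card V * d ≤ 2 * (Fintype.card V * (m * D)) + Fintype.card V * D →
      2 * x + Fintype.card V < 2 * d) :
    ∃ (x : Fin (m * D + (D + Δ) * q) → V) (w : ∀ j, G.Walk (x j) (x j)),
      (∀ j, (w j).IsHamiltonianCycle) ∧ ∀ e ∈ G.edgeSet, ∃ j, e ∈ (w j).edges := by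
  obtain ⟨l, hl, hcov⟩ := exists_enumerations_cover G c hc
  have hmiss := sum_missing_le G hd c hc l hl hcov
  rw [Fintype.card_prod, Fintype.card_fin, Fintype.card_fin] at hmiss
  obtain ⟨l₁, Q, hl₁, hm₁, hQ, -, hkeep⟩ := exists_repair_family G hd
    (∑ i, missing G (l i)) Δ (fun x hx => hΔ x (by omega)) l hl ∅ (by simp) (by simp)
  let F : V → V → Prop := fun u v => G.Adj u v ∧ (c v = c u ∨ s(u, v) ∈ Q)
  have hFdeg : ∀ u, (Finset.univ.filter fun v => F u v).card ≤ D + Δ := by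
    intro u
    have hQu : ((Finset.univ.filter fun v => s(u, v) ∈ Q)).card ≤ Δ := by
      refine (Finset.card_le_card_of_injOn (fun v => s(u, v)) (fun v hv => ?_) ?_).trans (hQ u)
      · simpa using hv
      · intro v _ w _ h
        exact Sym2.congr_right.1 h
    refine le_trans (Finset.card_le_card (t := ((G.neighborFinset u).filter fun v => c v = c u) ∪
      Finset.univ.filter fun v => s(u, v) ∈ Q) fun v hv => ?_)
      ((Finset.card_union_le _ _).trans (Nat.add_le_add (hc u _) hQu))
    simp only [Finset.mem_union, Finset.mem_filter, SimpleGraph.mem_neighborFinset,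
      Finset.mem_univ, true_and, F] at hv ⊢
    tauto
  obtain ⟨l₂, hl₂, hm₂, hcov₂⟩ := exists_cover_sparse G hd hs hq F
    (fun u v h => ⟨h.1.symm, h.2.imp Eq.symm fun h => Sym2.eq_swap ▸ h⟩) (fun u v h => h.1) hFdeg
  let ι := (Fin m × Fin D) ⊕ (Fin (D + Δ) × Fin q)
  let L : ι → List V := Sum.elim l₁ l₂
  have hL : ∀ i, ∃ (x : V) (w : G.Walk x x), w.IsHamiltonianCycle ∧
      ∀ e ∈ cycleEdges (L i), e ∈ w.edges := by
    rintro (i | i)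
    · exact exists_hamiltonianCycle G hV (hl₁ i) (hm₁ i)
    · exact exists_hamiltonianCycle G hV (hl₂ i) (hm₂ i)
  choose x w hw hLw using hL
  let f : Fin (m * D + (D + Δ) * q) ≃ ι :=
    (Fintype.equivFinOfCardEq (by simp [ι])).symm
  refine ⟨fun j => x (f j), fun j => w (f j), fun j => hw _, fun e he => ?_⟩
  suffices ∃ i, e ∈ cycleEdges (L i) by
    obtain ⟨i, hi⟩ := this
    exact ⟨f.symm i, by simpa using hLw (f (f.symm i)) e (by simpa using hi)⟩
  induction e with
  | _ u v =>
    have huv : G.Adj u v := he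
    by_cases hF : F u v
    · obtain ⟨i, hi⟩ := hcov₂ u v hF
      exact ⟨Sum.inr i, hi⟩
    · have hcuv : c u ≠ c v := fun h => hF ⟨huv, Or.inl h.symm⟩
      obtain ⟨i, hi⟩ := hcov u v huv hcuv
      rcases hkeep i _ hi he with h | h
      · exact ⟨Sum.inl i, h⟩
      · exact absurd ⟨huv, Or.inr h⟩ hF

end

end HamiltonCover

open HamiltonCover

/-- For every ξ > 0 there exists n₀ such that every d-regular graph on n ≥ n₀ vertices with
d ≥ (1/2 + ξ)n contains a set of at most (d + ξn)/2 Hamilton cycles covering all its edges. -/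
theorem regular_graph_hamilton_cover (ξ : ℝ) (hξ : 0 < ξ) :
    ∃ n₀ : ℕ, ∀ (V : Type) [Fintype V] [DecidableEq V] (G : SimpleGraph V)
      [DecidableRel G.Adj] (d : ℕ),
      n₀ ≤ Fintype.card V →
      G.IsRegularOfDegree d →
      ((1 / 2 + ξ) * (Fintype.card V : ℝ) ≤ (d : ℝ)) →
      ∃ (m : ℕ) (x : Fin m → V) (c : ∀ j : Fin m, G.Walk (x j) (x j)),
        (m : ℝ) ≤ ((d : ℝ) + ξ * (Fintype.card V : ℝ)) / 2 ∧
        (∀ j, (c j).IsHamiltonianCycle) ∧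
        ∀ e ∈ G.edgeSet, ∃ j : Fin m, e ∈ (c j).edges := by
  obtain ⟨m, hm⟩ := exists_nat_gt (400 / ξ ^ 3 + 2)
  have hξ3 : 0 < ξ ^ 3 := by positivity
  have hm2 : (2 : ℝ) < m := by linarith [show (0 : ℝ) < 400 / ξ ^ 3 by positivity]
  have hmξ : 400 < m * ξ ^ 3 := by
    rw [← div_lt_iff₀ hξ3]; linarith
  have hm0 : 0 < m := by exact_mod_cast (by linarith : (0 : ℝ) < m)
  set γ : ℝ := ξ ^ 3 / (400 * m) with hγ
  have hγm : m * γ = ξ ^ 3 / 400 := by rw [hγ]; field_simp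
  have hγ0 : 0 < γ := by positivity
  obtain ⟨n₁, hn₁⟩ := exists_balanced_labelling (k := 2 * m) (by omega) hγ0
  refine ⟨n₁ + 3 + ⌈8 / ξ⌉₊ + ⌈90 / ξ ^ 2⌉₊, fun V _ _ G _ d hn hd hdn => ?_⟩
  obtain ⟨c, hc⟩ := hn₁ V (fun v => G.neighborFinset v) d (by omega) (fun v => hd v)
  obtain ⟨N, hN⟩ : ∃ N : ℝ, N = Fintype.card V := ⟨_, rfl⟩
  have hn8 : 8 / ξ ≤ N := by
    rw [hN]; exact (Nat.le_ceil _).trans (by exact_mod_cast (by omega))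
  have hn90 : 90 / ξ ^ 2 ≤ N := by
    rw [hN]; exact (Nat.le_ceil _).trans (by exact_mod_cast (by omega))
  rw [← hN] at hdn hc ⊢
  have hN0 : 0 < N := lt_of_lt_of_le (by positivity) hn8
  have hdN : (d : ℝ) ≤ N := by
    obtain ⟨v⟩ : Nonempty V := Fintype.card_pos_iff.1 (by omega)
    rw [hN, ← hd v]; exact_mod_cast (G.degree_lt_card_verts v).le
  have hξ1 : ξ ≤ 1 / 2 := by
    have : (1 / 2 + ξ) * N ≤ 1 * N := by linarith
    linarith [le_of_mul_le_mul_right this hN0]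
  obtain ⟨D, hD⟩ : ∃ D, D = ⌊(d : ℝ) / (2 * m) + γ * N⌋₊ := ⟨_, rfl⟩
  have hDle : (D : ℝ) ≤ d / (2 * m) + γ * N := by
    rw [hD]; exact Nat.floor_le (by positivity)
  have hmD : m * (D : ℝ) ≤ d / 2 + ξ ^ 3 / 400 * N := by
    calc m * (D : ℝ) ≤ m * (d / (2 * m) + γ * N) := by gcongr
      _ = d / 2 + m * γ * N := by field_simp
      _ = _ := by rw [hγm]
  have hDN : (D : ℝ) ≤ ξ ^ 3 / 400 * N := by
    have hmpos : (0 : ℝ) < m := by linarith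
    refine le_of_mul_le_mul_left ?_ hmpos
    have h₁ : 400 * N ≤ m * ξ ^ 3 * N := by gcongr
    have h₂ : 2 * (ξ ^ 3 * N) ≤ m * (ξ ^ 3 * N) := by gcongr
    nlinarith
  obtain ⟨Δ, hΔ⟩ : ∃ Δ, Δ = ⌈ξ ^ 2 / 100 * N⌉₊ := ⟨_, rfl⟩
  have hΔ₁ : ξ ^ 2 / 100 * N ≤ Δ := hΔ ▸ Nat.le_ceil _
  have hΔ₂ : (Δ : ℝ) ≤ ξ ^ 2 / 100 * N + 1 := hΔ ▸ (Nat.ceil_lt_add_one (by positivity)).le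
  obtain ⟨s, hs⟩ : ∃ s, s = ⌊ξ / 4 * N⌋₊ := ⟨_, rfl⟩
  have hs₁ : (s : ℝ) ≤ ξ / 4 * N := hs ▸ Nat.floor_le (by positivity)
  have hs₂ : ξ / 4 * N < s + 1 := hs ▸ Nat.lt_floor_add_one _
  obtain ⟨q, hq⟩ : ∃ q, q = ⌈8 / ξ⌉₊ := ⟨_, rfl⟩
  have hq₁ : 8 / ξ ≤ q := hq ▸ Nat.le_ceil _
  have hq₂ : (q : ℝ) ≤ 9 / ξ := by
    have h₁ : (q : ℝ) ≤ 8 / ξ + 1 := hq ▸ (Nat.ceil_lt_add_one (by positivity)).le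
    have h₂ : 1 ≤ 1 / ξ := by rw [le_div_iff₀ hξ]; linarith
    have h₃ : 9 / ξ = 8 / ξ + 1 / ξ := by ring
    linarith
  have hξN : 0 < ξ * N := by positivity
  obtain ⟨x, w, hw, hcov⟩ := exists_hamilton_cover_of_labelling G (m := m) (D := D) (Δ := Δ)
    (s := s) (q := q) (by omega) hd c
    (fun v j => hD ▸ Nat.le_floor (by simpa using hc v j))
    (by
      have : 2 * (s : ℝ) + N < 2 * d := by nlinarith
      rw [hN] at this; exact_mod_cast this)
    (by
      have h₁ : 8 / ξ * (ξ / 4 * N - 1) ≤ q * s := by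
        have : ξ / 4 * N - 1 ≤ s := by linarith
        calc 8 / ξ * (ξ / 4 * N - 1) ≤ 8 / ξ * s := by gcongr
          _ ≤ q * s := by gcongr
      have h₂ : 8 / ξ * (ξ / 4 * N - 1) = 2 * N - 8 / ξ := by field_simp; ring
      have : N ≤ q * s := by linarith
      rw [hN] at this; exact_mod_cast this)
    (fun x hx => by
      have hx : (x : ℝ) * Δ + N * d ≤ 2 * (N * (m * D)) + N * D := by
        rw [hN]; exact_mod_cast hx
      have h₁ : N * (m * D) ≤ N * (d / 2 + ξ ^ 3 / 400 * N) := by gcongr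
      have h₂ : N * D ≤ N * (ξ ^ 3 / 400 * N) := by gcongr
      have h₃ : (x : ℝ) * (ξ ^ 2 / 100 * N) ≤ x * Δ := by gcongr
      have h₄ : x * (ξ ^ 2 / 100 * N) ≤ 3 / 4 * ξ * N * (ξ ^ 2 / 100 * N) := by linarith
      have h₅ : (x : ℝ) ≤ 3 / 4 * ξ * N := le_of_mul_le_mul_right h₄ (by positivity)
      have : 2 * (x : ℝ) + N < 2 * d := by linarith
      rw [hN] at this; exact_mod_cast this)
  refine ⟨_, x, w, ?_, hw, hcov⟩
  push_cast
  have h₁ : ((D : ℝ) + Δ) * q ≤ (ξ ^ 3 / 400 * N + (ξ ^ 2 / 100 * N + 1)) * (9 / ξ) := by gcongr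
  have h₂ : (ξ ^ 3 / 400 * N + (ξ ^ 2 / 100 * N + 1)) * (9 / ξ) =
      9 / 400 * ξ ^ 2 * N + 9 / 100 * ξ * N + 9 / ξ := by field_simp; ring
  have h₃ : 9 / ξ ≤ ξ * N / 10 := by
    rw [div_le_iff₀ (by positivity)] at hn90 ⊢
    linarith
  have h₄ : ξ ^ 2 * N ≤ 1 / 2 * (ξ * N) := by nlinarith
  have h₅ : ξ ^ 3 * N ≤ 1 / 4 * (ξ * N) := by nlinarith
  linarith
end
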